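/- Lappan-type normality criterion in ℂⁿ: a family 𝓕 of holomorphic functions on a domain Ω ⊆ ℂⁿ is normal on Ω if and only if for each compact set K ⊂ Ω there exist a set E = E(K) ⊆ ℂ containing at least three distinct values and a constant M = M(K) > 0 such that for all f ∈ 𝓕 and all z ∈ K with f(z) ∈ E one has f^♯(z) ≤ M. -/

import Mathlib

open Filter Topology

abbrev Cn (n : ℕ) := EuclideanSpace ℂ (Fin n)

/-- Chordal (spherical) distance between two finite points of the Riemann sphere. -/
noncomputable def chordal (a b : ℂ) : ℝ :=
  dist a b / (Real.sqrt (1 + ‖a‖^2) * Real.sqrt (1 + ‖b‖^2))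

/-- Chordal distance between a finite point and ∞. -/
noncomputable def chordalInf (a : ℂ) : ℝ := 1 / Real.sqrt (1 + ‖a‖^2)

/-- Spherical derivative of a holomorphic function of several complex variables. -/
noncomputable def sphDeriv {E : Type} [NormedAddCommGroup E] [NormedSpace ℂ E]
    (f : E → ℂ) (z : E) : ℝ := ‖fderiv ℂ f z‖ / (1 + ‖f z‖^2)

/-- A family `F` of (holomorphic) functions is normal on `Ω`: every sequence from `F`
has a subsequence which converges uniformly on compact subsets of `Ω` in the spherical
metric, either to a holomorphic function or to ∞. -/
def IsNormalFamily {E : Type} [NormedAddCommGroup E] [NormedSpace ℂ E]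
    (Ω : Set E) (F : Set (E → ℂ)) : Prop :=
  ∀ s : ℕ → E → ℂ, (∀ j, s j ∈ F) →
    ∃ φ : ℕ → ℕ, StrictMono φ ∧
      ((∃ g : E → ℂ, DifferentiableOn ℂ g Ω ∧
          ∀ K, K ⊆ Ω → IsCompact K → ∀ ε > 0, ∃ N, ∀ j ≥ N, ∀ z ∈ K,
            chordal (s (φ j) z) (g z) < ε) ∨
        (∀ K, K ⊆ Ω → IsCompact K → ∀ M : ℝ, ∃ N, ∀ j ≥ N, ∀ z ∈ K, M < ‖s (φ j) z‖))

open Metric Bornology Polynomial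

/-! By Marty's criterion, normality means that the spherical derivatives of the family are locally
bounded. Restricting to complex lines, the needed bound follows from the one-variable case; if it
failed there, Zalcman's rescaling would produce a limit `h` of rescaled members of the family with
`h^♯ 0 ≠ 0`, and such an `h`, if entire, has vanishing derivative wherever it takes a value in `E`.

Such an entire function `h` is constant by a second rescaling, which takes the place of Nevanlinna
theory. For a cubic `P` with simple roots in `E`, each root of `P` is taken by `h` with multiplicity
at least two, so `h' ^ 2 = G * P(h)` with `G` entire. Rescaling at points where `|G|` is large and
almost maximal makes `G` constant in the limit, and solutions of this equation have locally bounded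
spherical derivative since `deg P ≤ 4`. Nonconstant solutions converge neither to a constant, as `P`
has simple roots, nor to `∞`, which is likewise a simple root of `P` read in the chart `1 / h` as
`deg P = 3`. So the limit equation with constant `G` has nonconstant solutions, all of them bounded
because the translates of an unbounded one would tend to `∞`; this contradicts Liouville's theorem.
-/

section ContinuousConvergence

variable {ι X Y : Type*} {l : Filter ι}

lemma exists_ball_eventually_forall [PseudoMetricSpace X] {Q : ι → X → Prop} {z : X} {U : Set X}
    (hU : U ∈ 𝓝 z) (hQ : ∀ᶠ p in l ×ˢ 𝓝 z, Q p.1 p.2) :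
    ∃ r > 0, ball z r ⊆ U ∧ ∀ᶠ j in l, ∀ y ∈ ball z r, Q j y := by
  obtain ⟨p, hp, q, hq, hpq⟩ := eventually_prod_iff.1 hQ
  obtain ⟨r, hr, hrU⟩ := Metric.mem_nhds_iff.1 (inter_mem hU hq)
  exact ⟨r, hr, fun y hy => (hrU hy).1, hp.mono fun j hj y hy => hpq hj (hrU hy).2⟩

lemma tendsto_apply_of_tendsto_prod [TopologicalSpace X] {F : ι → X → Y} {x : X} {m : Filter Y}
    (h : Tendsto (fun p : ι × X => F p.1 p.2) (l ×ˢ 𝓝 x) m) :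
    Tendsto (fun j => F j x) l m :=
  h.comp (tendsto_id.prodMk tendsto_const_nhds)

lemma tendstoLocallyUniformlyOn_of_forall_tendsto_prod [NeBot l] [TopologicalSpace X]
    [PseudoMetricSpace Y] {F : ι → X → Y} {f : X → Y} {U : Set X}
    (h : ∀ x ∈ U, Tendsto (fun p : ι × X => F p.1 p.2) (l ×ˢ 𝓝 x) (𝓝 (f x))) :
    TendstoLocallyUniformlyOn F f l U := by
  refine Metric.tendstoLocallyUniformlyOn_iff.2 fun ε hε x hx => ?_
  obtain ⟨p, hp, q, hq, hpq⟩ :=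
    eventually_prod_iff.1 ((h x hx).eventually (ball_mem_nhds (f x) (half_pos hε)))
  refine ⟨{y | q y} ∩ U, inter_mem (mem_nhdsWithin_of_mem_nhds hq) self_mem_nhdsWithin, ?_⟩
  filter_upwards [hp] with j hj y hy
  have hfy : dist (f y) (f x) ≤ ε / 2 :=
    le_of_tendsto ((tendsto_apply_of_tendsto_prod (h y hy.2)).dist tendsto_const_nhds)
      (hp.mono fun i hi => (hpq hi hy.1).le)
  calc dist (f y) (F j y) ≤ dist (f y) (f x) + dist (F j y) (f x) := dist_triangle_right _ _ _
    _ < ε := by linarith [mem_ball.1 (hpq hj hy.1)]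

lemma tendsto_prod_of_tendstoLocallyUniformlyOn [TopologicalSpace X] [PseudoMetricSpace Y]
    {F : ι → X → Y} {f : X → Y} {U : Set X} {x : X} (h : TendstoLocallyUniformlyOn F f l U)
    (hU : IsOpen U) (hx : x ∈ U) (hf : ContinuousAt f x) :
    Tendsto (fun p : ι × X => F p.1 p.2) (l ×ˢ 𝓝 x) (𝓝 (f x)) :=
  (hf.tendsto.comp tendsto_snd).congr_dist <| tendsto_uniformity_iff_dist_tendsto_zero.1 <|
    hU.tendstoLocallyUniformlyOn_iff_forall_tendsto.1 h x hx

lemma exists_subseq_forall_tendsto [Countable ι] [PseudoMetricSpace Y] {K : Set Y}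
    (hK : IsCompact K) {u : ℕ → ι → Y} (hu : ∀ j i, u j i ∈ K) :
    ∃ φ : ℕ → ℕ, StrictMono φ ∧ ∀ i, ∃ y, Tendsto (fun j => u (φ j) i) atTop (𝓝 y) := by
  obtain ⟨y, -, φ, hφ, hy⟩ :=
    (isCompact_univ_pi fun _ : ι => hK).tendsto_subseq fun j i _ => hu j i
  exact ⟨φ, hφ, fun i => ⟨y i, tendsto_pi_nhds.1 hy i⟩⟩

lemma exists_tendsto_prod_of_denseRange [NeBot l] [TopologicalSpace X] [PseudoMetricSpace Y]
    [CompleteSpace Y] {κ : Type*} {d : κ → X} (hd : DenseRange d) {F : ι → X → Y}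
    (hlim : ∀ i, ∃ y, Tendsto (fun j => F j (d i)) l (𝓝 y)) {x : X}
    (hx : Tendsto (fun p : ι × X => dist (F p.1 p.2) (F p.1 x)) (l ×ˢ 𝓝 x) (𝓝 0)) :
    ∃ y, Tendsto (fun p : ι × X => F p.1 p.2) (l ×ˢ 𝓝 x) (𝓝 y) := by
  refine cauchy_map_iff_exists_tendsto.1 (Metric.cauchy_iff.2 ⟨inferInstance, fun ε hε => ?_⟩)
  obtain ⟨p, hp, q, hq, hpq⟩ :=
    eventually_prod_iff.1 (hx.eventually (gt_mem_nhds (by positivity : 0 < ε / 6)))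
  obtain ⟨_, hqi, i, rfl⟩ := mem_closure_iff_nhds.1 (hd x) {y | q y} hq
  obtain ⟨c, hc⟩ := hlim i
  have hball : ∀ᶠ t in l ×ˢ 𝓝 x, F t.1 t.2 ∈ ball c (ε / 2) := by
    filter_upwards [(hp.and (hc.eventually (ball_mem_nhds c (by positivity : 0 < ε / 6)))).prod_mk
      hq] with t ⟨⟨hpt, hct⟩, hqt⟩
    have hty : dist (F t.1 t.2) (F t.1 x) < ε / 6 := hpq hpt hqt
    have hdx : dist (F t.1 (d i)) (F t.1 x) < ε / 6 := hpq hpt hqi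
    calc dist (F t.1 t.2) c
        ≤ dist (F t.1 t.2) (F t.1 x) + dist (F t.1 x) (F t.1 (d i)) + dist (F t.1 (d i)) c :=
          dist_triangle4 _ _ _ _
      _ < ε / 2 := by rw [dist_comm (F t.1 x)]; linarith [mem_ball.1 hct]
  exact ⟨ball c (ε / 2), hball, fun a ha b hb => by
    linarith [dist_triangle_right a b c, mem_ball.1 ha, mem_ball.1 hb]⟩

lemma exists_subseq_forall_tendsto_prod [TopologicalSpace X] [TopologicalSpace.SeparableSpace X]
    [PseudoMetricSpace Y] [CompleteSpace Y] {K : Set Y} (hK : IsCompact K) {F : ℕ → X → Y}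
    (hF : ∀ j x, F j x ∈ K) {U : Set X} (hU : ∀ x ∈ U,
      Tendsto (fun p : ℕ × X => dist (F p.1 p.2) (F p.1 x)) (atTop ×ˢ 𝓝 x) (𝓝 0)) :
    ∃ φ : ℕ → ℕ, StrictMono φ ∧ ∀ x ∈ U, ∃ y,
      Tendsto (fun p : ℕ × X => F (φ p.1) p.2) (atTop ×ˢ 𝓝 x) (𝓝 y) := by
  obtain ⟨D, hDc, hD⟩ := TopologicalSpace.exists_countable_dense X
  have := hDc.to_subtype
  obtain ⟨φ, hφ, hlim⟩ := exists_subseq_forall_tendsto hK fun j (i : D) => hF j i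
  exact ⟨φ, hφ, fun x hx => exists_tendsto_prod_of_denseRange hD.denseRange_val
    (F := fun j => F (φ j)) hlim ((hU x hx).comp (hφ.tendsto_atTop.prodMap tendsto_id))⟩

end ContinuousConvergence

section StereographicProjection

/-- Inverse stereographic projection `ℂ → ℂ × ℝ`, scaled to the sphere of diameter `1` through the
origin, so that `∞` corresponds to `(0, 0)`. It turns a bound on the spherical derivative of a
function into a Lipschitz bound. -/
noncomputable def stereo (a : ℂ) : ℂ × ℝ := ((1 + ‖a‖ ^ 2)⁻¹ • a, (1 + ‖a‖ ^ 2)⁻¹)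

lemma stereo_mem_closedBall (a : ℂ) : stereo a ∈ closedBall (0 : ℂ × ℝ) 1 := by
  have h : 0 < 1 + ‖a‖ ^ 2 := by positivity
  rw [mem_closedBall_zero_iff, Prod.norm_def, max_le_iff]
  simp only [stereo, norm_smul, norm_inv, Real.norm_of_nonneg h.le]
  refine ⟨?_, inv_le_one_of_one_le₀ (by nlinarith)⟩
  rw [inv_mul_le_one₀ h]
  nlinarith [sq_nonneg (‖a‖ - 1)]

lemma hasFDerivAt_inv_one_add_norm_sq (a : ℂ) :
    HasFDerivAt (fun b : ℂ => (1 + ‖b‖ ^ 2)⁻¹)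
      (-((1 + ‖a‖ ^ 2) ^ 2)⁻¹ • (2 • innerSL ℝ a)) a :=
  (hasDerivAt_inv (by positivity : 1 + ‖a‖ ^ 2 ≠ 0)).comp_hasFDerivAt a
    ((hasStrictFDerivAt_norm_sq a).hasFDerivAt.const_add 1)

lemma differentiable_stereo : Differentiable ℝ stereo := fun a =>
  have h := (hasFDerivAt_inv_one_add_norm_sq a).differentiableAt
  (h.smul differentiableAt_id).prodMk h

lemma norm_fderiv_stereo_le (a : ℂ) : ‖fderiv ℝ stereo a‖ ≤ 3 / (1 + ‖a‖ ^ 2) := by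
  have hpos : 0 < 1 + ‖a‖ ^ 2 := by positivity
  have hweight := hasFDerivAt_inv_one_add_norm_sq a
  have hfderiv : HasFDerivAt stereo _ a := (hweight.smul (hasFDerivAt_id a)).prodMk hweight
  rw [hfderiv.fderiv]
  refine ContinuousLinearMap.opNorm_le_bound _ (by positivity) fun v => ?_
  set t : ℝ := (-((1 + ‖a‖ ^ 2) ^ 2)⁻¹ • (2 • innerSL ℝ a)) v with ht
  have hinner : ‖t‖ ≤ 2 * (‖a‖ * ‖v‖) / (1 + ‖a‖ ^ 2) ^ 2 := by
    calc ‖t‖ = 2 * |inner ℝ a v| / (1 + ‖a‖ ^ 2) ^ 2 := by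
          simp only [ht, _root_.smul_apply, innerSL_apply_apply, nsmul_eq_mul, smul_eq_mul,
            Nat.cast_ofNat, norm_mul, norm_neg, norm_inv, norm_pow, Real.norm_of_nonneg hpos.le,
            Real.norm_eq_abs, abs_two, div_eq_inv_mul]
      _ ≤ _ := by gcongr; exact abs_real_inner_le_norm a v
  have hsnd : ‖t‖ ≤ ‖v‖ / (1 + ‖a‖ ^ 2) := by
    refine hinner.trans ?_
    rw [div_le_div_iff₀ (by positivity) hpos]
    nlinarith [mul_nonneg (mul_nonneg (norm_nonneg v) hpos.le) (sq_nonneg (‖a‖ - 1))]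
  have hfst : ‖t‖ * ‖a‖ ≤ 2 * ‖v‖ / (1 + ‖a‖ ^ 2) := by
    refine (mul_le_mul_of_nonneg_right hinner (norm_nonneg a)).trans ?_
    rw [div_mul_eq_mul_div, div_le_div_iff₀ (by positivity) hpos]
    nlinarith [mul_nonneg (norm_nonneg v) hpos.le]
  have hv : 3 / (1 + ‖a‖ ^ 2) * ‖v‖ = ‖v‖ / (1 + ‖a‖ ^ 2) + 2 * ‖v‖ / (1 + ‖a‖ ^ 2) := by ring
  change ‖((1 + ‖a‖ ^ 2)⁻¹ • v + t • a, t)‖ ≤ _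
  rw [hv, Prod.norm_def, max_le_iff]
  refine ⟨(norm_add_le _ _).trans (add_le_add ?_ ?_), hsnd.trans ?_⟩
  · rw [norm_smul, norm_inv, Real.norm_of_nonneg hpos.le, div_eq_inv_mul]
  · rwa [norm_smul]
  · exact le_add_of_nonneg_right (by positivity)

lemma dist_stereo_le {V : Type} [NormedAddCommGroup V] [NormedSpace ℂ V] {f : V → ℂ} {s : Set V}
    (hs : Convex ℝ s) {C : ℝ} (hf : ∀ z ∈ s, DifferentiableAt ℂ f z)
    (hC : ∀ z ∈ s, sphDeriv f z ≤ C) {z w : V} (hz : z ∈ s) (hw : w ∈ s) :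
    dist (stereo (f z)) (stereo (f w)) ≤ 3 * C * dist z w := by
  have hderiv (x : V) (hx : x ∈ s) : HasFDerivAt (𝕜 := ℝ) (fun y => stereo (f y))
      ((fderiv ℝ stereo (f x)).comp ((fderiv ℂ f x).restrictScalars ℝ)) x :=
    (differentiable_stereo (f x)).hasFDerivAt.comp x ((hf x hx).hasFDerivAt.restrictScalars ℝ)
  have hbound (x : V) (hx : x ∈ s) :
      ‖(fderiv ℝ stereo (f x)).comp ((fderiv ℂ f x).restrictScalars ℝ)‖ ≤ 3 * C :=
    calc _ ≤ ‖fderiv ℝ stereo (f x)‖ * ‖(fderiv ℂ f x).restrictScalars ℝ‖ :=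
          ContinuousLinearMap.opNorm_comp_le _ _
      _ ≤ 3 / (1 + ‖f x‖ ^ 2) * ‖fderiv ℂ f x‖ := by
          rw [ContinuousLinearMap.norm_restrictScalars]
          gcongr
          exact norm_fderiv_stereo_le (f x)
      _ = 3 * sphDeriv f x := by rw [sphDeriv]; ring
      _ ≤ 3 * C := by gcongr; exact hC x hx
  rw [dist_eq_norm, dist_eq_norm]
  exact hs.norm_image_sub_le_of_norm_hasFDerivWithin_le
    (fun x hx => (hderiv x hx).hasFDerivWithinAt) hbound hw hz

lemma tendsto_nhds_or_cobounded_of_tendsto_stereo {ι : Type*} {l : Filter ι} {u : ι → ℂ}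
    {q : ℂ × ℝ} (h : Tendsto (fun i => stereo (u i)) l (𝓝 q)) :
    (∃ c, Tendsto u l (𝓝 c)) ∨ Tendsto u l (cobounded ℂ) := by
  have hfst : Tendsto (fun i => (1 + ‖u i‖ ^ 2)⁻¹ • u i) l (𝓝 q.1) := h.fst_nhds
  have hsnd : Tendsto (fun i => (1 + ‖u i‖ ^ 2)⁻¹) l (𝓝 q.2) := h.snd_nhds
  have hpos (i) : 0 < 1 + ‖u i‖ ^ 2 := by positivity
  by_cases hq : q.2 = 0
  · right
    rw [hq] at hsnd
    have hinv := (tendsto_inv_nhdsGT_zero.comp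
      (tendsto_nhdsWithin_iff.2 ⟨hsnd, .of_forall fun i => inv_pos.2 (hpos i)⟩))
    simp only [Function.comp_def, inv_inv] at hinv
    have hsq := tendsto_atTop_add_const_left l (-1) hinv
    simp only [neg_add_cancel_left] at hsq
    exact tendsto_norm_atTop_iff_cobounded.1
      ((Real.tendsto_sqrt_atTop.comp hsq).congr fun i => Real.sqrt_sq (norm_nonneg _))
  · refine .inl ⟨q.2⁻¹ • q.1, ((hsnd.inv₀ hq).smul hfst).congr fun i => ?_⟩
    rw [smul_smul, inv_inv, mul_inv_cancel₀ (hpos i).ne', one_smul]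

end StereographicProjection

section LocallyBoundedSphDeriv

variable {ι : Type*} {V : Type} [NormedAddCommGroup V] [NormedSpace ℂ V]

/-- Marty's condition, in the form suited to sequences: near every point of `Ω` the functions `F j`
are, for `j` large along `l`, differentiable with uniformly bounded spherical derivative. -/
def LocallyBoundedSphDerivOn (F : ι → V → ℂ) (l : Filter ι) (Ω : Set V) : Prop :=
  ∀ z ∈ Ω, ∃ C, ∀ᶠ p in l ×ˢ 𝓝 z, DifferentiableAt ℂ (F p.1) p.2 ∧ sphDeriv (F p.1) p.2 ≤ C

namespace LocallyBoundedSphDerivOn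

variable {l : Filter ι} {F : ι → V → ℂ} {Ω : Set V} {z : V}

lemma comp_tendsto (hF : LocallyBoundedSphDerivOn F l Ω) {κ : Type*} {m : Filter κ} {φ : κ → ι}
    (hφ : Tendsto φ m l) : LocallyBoundedSphDerivOn (fun j => F (φ j)) m Ω := fun z hz =>
  (hF z hz).imp fun _ hC => (hφ.prodMap tendsto_id).eventually hC

lemma eventually_differentiableAt (hF : LocallyBoundedSphDerivOn F l Ω) (hz : z ∈ Ω) :
    ∀ᶠ p in l ×ˢ 𝓝 z, DifferentiableAt ℂ (F p.1) p.2 :=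
  (hF z hz).elim fun _ hC => hC.mono fun _ hp => hp.1

lemma tendsto_dist_stereo (hF : LocallyBoundedSphDerivOn F l Ω) (hz : z ∈ Ω) :
    Tendsto (fun p : ι × V => dist (stereo (F p.1 p.2)) (stereo (F p.1 z))) (l ×ˢ 𝓝 z) (𝓝 0) := by
  obtain ⟨C, hC⟩ := hF z hz
  obtain ⟨r, hr, -, hrC⟩ := exists_ball_eventually_forall
    (Q := fun j y => DifferentiableAt ℂ (F j) y ∧ sphDeriv (F j) y ≤ C) univ_mem hC
  have hdist : Tendsto (fun p : ι × V => 3 * C * dist p.2 z) (l ×ˢ 𝓝 z) (𝓝 0) := by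
    simpa using ((tendsto_snd.dist tendsto_const_nhds).const_mul (3 * C) :
      Tendsto (fun p : ι × V => 3 * C * dist p.2 z) (l ×ˢ 𝓝 z) (𝓝 (3 * C * dist z z)))
  refine squeeze_zero' (.of_forall fun p => dist_nonneg) ?_ hdist
  filter_upwards [hrC.prod_mk (ball_mem_nhds z hr)] with p hp
  exact dist_stereo_le (convex_ball z r) (fun y hy => (hp.1 y hy).1) (fun y hy => (hp.1 y hy).2)
    hp.2 (mem_ball_self hr)

theorem exists_subseq_forall_tendsto_nhds_or_cobounded [TopologicalSpace.SeparableSpace V]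
    {F : ℕ → V → ℂ} (hF : LocallyBoundedSphDerivOn F atTop Ω) :
    ∃ φ : ℕ → ℕ, StrictMono φ ∧ ∀ z ∈ Ω,
      (∃ c, Tendsto (fun p : ℕ × V => F (φ p.1) p.2) (atTop ×ˢ 𝓝 z) (𝓝 c)) ∨
        Tendsto (fun p : ℕ × V => F (φ p.1) p.2) (atTop ×ˢ 𝓝 z) (cobounded ℂ) := by
  obtain ⟨φ, hφ, hlim⟩ := exists_subseq_forall_tendsto_prod (isCompact_closedBall 0 1)
    (fun j z => stereo_mem_closedBall (F j z)) fun z hz => hF.tendsto_dist_stereo hz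
  exact ⟨φ, hφ, fun z hz => (hlim z hz).elim fun _ h =>
    tendsto_nhds_or_cobounded_of_tendsto_stereo h⟩

end LocallyBoundedSphDerivOn

end LocallyBoundedSphDeriv

section LocallyUniformLimits

variable {ι V G : Type*} [NormedAddCommGroup V] [NormedSpace ℂ V] [NormedAddCommGroup G]
  [NormedSpace ℂ G] {l : Filter ι}

lemma norm_fderiv_le_of_forall_mem_ball_norm_le {f : V → G} {z : V} {r B : ℝ} (hr : 0 < r)
    (hf : DifferentiableOn ℂ f (ball z r)) (hB : ∀ y ∈ ball z r, ‖f y‖ ≤ B) :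
    ‖fderiv ℂ f z‖ ≤ 2 * B / r := by
  refine Complex.norm_fderiv_le_div_of_mapsTo_ball hf (fun y hy => ?_) hr
  rw [mem_closedBall, dist_eq_norm, two_mul]
  exact norm_sub_le_of_le (hB y hy) (hB z (mem_ball_self hr))

lemma uniformCauchySeqOn_fderiv {F : ι → V → G} {x : V} {r : ℝ} (hr : 0 < r)
    (hF : ∀ᶠ j in l, DifferentiableOn ℂ (F j) (ball x (2 * r)))
    (hc : UniformCauchySeqOn F l (ball x (2 * r))) :
    UniformCauchySeqOn (fun j => fderiv ℂ (F j)) l (ball x r) := by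
  intro u hu
  obtain ⟨ε, hε, hεu⟩ := Metric.mem_uniformity_dist.1 hu
  filter_upwards [hc _ (dist_mem_uniformity (by positivity : 0 < ε * r / 4)), hF.prod_mk hF]
    with ⟨j, k⟩ hjk ⟨hj, hk⟩ y hy
  have hsub : ball y r ⊆ ball x (2 * r) :=
    ball_subset_ball' (by linarith [mem_ball.1 hy])
  have hyx : ball x (2 * r) ∈ 𝓝 y := isOpen_ball.mem_nhds (hsub (mem_ball_self hr))
  apply hεu
  calc dist (fderiv ℂ (F j) y) (fderiv ℂ (F k) y) = ‖fderiv ℂ (F j - F k) y‖ := by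
        rw [dist_eq_norm, fderiv_sub (hj.differentiableAt hyx) (hk.differentiableAt hyx)]
    _ ≤ 2 * (ε * r / 4) / r := norm_fderiv_le_of_forall_mem_ball_norm_le hr
        ((hj.sub hk).mono hsub) fun w hw => by
          simpa [dist_eq_norm] using (hjk w (hsub hw)).le
    _ < ε := by field_simp; norm_num

lemma differentiableAt_of_tendstoUniformlyOn_ball [NeBot l] [CompleteSpace G] {F : ι → V → G}
    {f : V → G} {x : V} {r : ℝ} (hr : 0 < r)
    (hF : ∀ᶠ j in l, DifferentiableOn ℂ (F j) (ball x (2 * r)))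
    (hf : TendstoUniformlyOn F f l (ball x (2 * r))) : DifferentiableAt ℂ f x := by
  have hcauchy := uniformCauchySeqOn_fderiv hr hF hf.uniformCauchySeqOn
  have hlim (y : V) (hy : y ∈ ball x r) : ∃ L, Tendsto (fun j => fderiv ℂ (F j) y) l (𝓝 L) :=
    cauchy_map_iff_exists_tendsto.1 (hcauchy.cauchy_map hy)
  choose! f' hf' using hlim
  have hx := ball_mem_nhds x hr
  have hsub : ball x r ⊆ ball x (2 * r) := ball_subset_ball (by linarith)
  refine (hasFDerivAt_of_tendstoUniformlyOnFilter (g' := f')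
    ((tendstoUniformlyOn_iff_tendstoUniformlyOnFilter.1
      (hcauchy.tendstoUniformlyOn_of_tendsto hf')).mono_right (le_principal_iff.2 hx)) ?_
    (mem_of_superset hx fun y hy => hf.tendsto_at (hsub hy))).differentiableAt
  filter_upwards [hF.prod_mk hx] with p hp
  exact (hp.1.differentiableAt (isOpen_ball.mem_nhds (hsub hp.2))).hasFDerivAt

theorem differentiableOn_of_tendstoLocallyUniformlyOn [NeBot l] [ProperSpace V] [CompleteSpace G]
    {F : ι → V → G} {f : V → G} {U : Set V} (hU : IsOpen U)
    (hF : ∀ᶠ j in l, DifferentiableOn ℂ (F j) U) (hf : TendstoLocallyUniformlyOn F f l U) :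
    DifferentiableOn ℂ f U := fun x hx => by
  obtain ⟨r, hr, hrU⟩ := nhds_basis_closedBall.mem_iff.1 (hU.mem_nhds hx)
  have hball : ball x (2 * (r / 2)) ⊆ closedBall x r := by
    rw [mul_div_cancel₀ r two_ne_zero]; exact ball_subset_closedBall
  exact (differentiableAt_of_tendstoUniformlyOn_ball (half_pos hr)
    (hF.mono fun j hj => hj.mono (hball.trans hrU))
    (((tendstoLocallyUniformlyOn_iff_forall_isCompact hU).1 hf _ hrU
      (isCompact_closedBall x r)).mono hball)).differentiableWithinAt

end LocallyUniformLimits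

section Hurwitz

variable {ι : Type*} {l : Filter ι}

lemma le_norm_of_forall_mem_sphere_le_norm {f : ℂ → ℂ} {w : ℂ} {r m : ℝ} (hr : 0 < r)
    (hm : 0 < m) (hf : DifferentiableOn ℂ f (closedBall w r)) (hne : ∀ y ∈ closedBall w r, f y ≠ 0)
    (hfm : ∀ y ∈ sphere w r, m ≤ ‖f y‖) : m ≤ ‖f w‖ := by
  have hcl : DiffContOnCl ℂ (fun y => (f y)⁻¹) (ball w r) := by
    refine DifferentiableOn.diffContOnCl ?_
    rw [closure_ball w hr.ne']
    exact hf.inv hne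
  have hmax : ‖(f w)⁻¹‖ ≤ m⁻¹ := by
    refine Complex.norm_le_of_forall_mem_frontier_norm_le isBounded_ball hcl (fun y hy => ?_)
      (subset_closure (mem_ball_self hr))
    rw [frontier_ball w hr.ne'] at hy
    rw [norm_inv]
    exact inv_anti₀ hm (hfm y hy)
  rwa [norm_inv, inv_le_inv₀ (norm_pos_iff.2 (hne w (mem_closedBall_self hr.le))) hm] at hmax

lemma ne_zero_of_tendstoUniformlyOn_closedBall [NeBot l] {F : ι → ℂ → ℂ} {f : ℂ → ℂ} {w : ℂ}
    {r : ℝ} (hr : 0 < r) (hF : ∀ᶠ j in l, DifferentiableOn ℂ (F j) (closedBall w r))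
    (hne : ∀ᶠ j in l, ∀ y ∈ closedBall w r, F j y ≠ 0)
    (hu : TendstoUniformlyOn F f l (closedBall w r)) (hf : ContinuousOn f (sphere w r))
    (hsphere : ∀ y ∈ sphere w r, f y ≠ 0) : f w ≠ 0 := by
  obtain ⟨y₀, hy₀, hmin⟩ := (isCompact_sphere w r).exists_isMinOn
    (NormedSpace.sphere_nonempty.2 hr.le) hf.norm
  have hm : 0 < ‖f y₀‖ := norm_pos_iff.2 (hsphere y₀ hy₀)
  have hlow : ∀ᶠ j in l, ‖f y₀‖ / 2 ≤ ‖F j w‖ := by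
    filter_upwards [hF, hne, Metric.tendstoUniformlyOn_iff.1 hu _ (half_pos hm)]
      with j hFj hj hclose
    refine le_norm_of_forall_mem_sphere_le_norm hr (half_pos hm) hFj hj fun y hy => ?_
    have hy_close : ‖f y - F j y‖ < ‖f y₀‖ / 2 := by
      simpa [dist_eq_norm] using hclose y (sphere_subset_closedBall hy)
    have hy_min : ‖f y₀‖ ≤ ‖f y‖ := hmin hy
    linarith [norm_sub_norm_le (f y) (F j y)]
  have hw : Tendsto (fun j => ‖F j w‖) l (𝓝 ‖f w‖) :=
    (hu.tendsto_at (mem_closedBall_self hr.le)).norm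
  exact norm_pos_iff.1 ((half_pos hm).trans_le (ge_of_tendsto hw hlow))

lemma eqOn_zero_of_tendstoLocallyUniformlyOn_complex [NeBot l] {F : ι → ℂ → ℂ} {f : ℂ → ℂ}
    {U : Set ℂ} (hU : IsOpen U) (hUc : IsPreconnected U)
    (hF : ∀ᶠ j in l, DifferentiableOn ℂ (F j) U) (hne : ∀ᶠ j in l, ∀ y ∈ U, F j y ≠ 0)
    (hf : TendstoLocallyUniformlyOn F f l U) {w : ℂ} (hw : w ∈ U) (hfw : f w = 0) :
    Set.EqOn f 0 U := by
  have hfan : AnalyticOnNhd ℂ f U := (hf.differentiableOn hF hU).analyticOnNhd hU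
  rcases (hfan w hw).eventually_eq_zero_or_eventually_ne_zero with hzero | hne_zero
  · exact hfan.eqOn_zero_of_preconnected_of_eventuallyEq_zero hUc hw hzero
  · obtain ⟨r, hr, hrU⟩ := nhds_basis_closedBall.mem_iff.1
      (inter_mem (hU.mem_nhds hw) (eventually_nhdsWithin_iff.1 hne_zero))
    have hsub : closedBall w r ⊆ U := fun y hy => (hrU hy).1
    exact absurd hfw <| ne_zero_of_tendstoUniformlyOn_closedBall hr
      (hF.mono fun j hj => hj.mono hsub) (hne.mono fun j hj y hy => hj y (hsub hy))
      ((tendstoLocallyUniformlyOn_iff_forall_isCompact hU).1 hf _ hsub (isCompact_closedBall w r))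
      (hfan.continuousOn.mono (sphere_subset_closedBall.trans hsub))
      fun y hy => (hrU (sphere_subset_closedBall hy)).2 (ne_of_mem_sphere hy hr.ne')

theorem eqOn_zero_of_tendstoLocallyUniformlyOn {V : Type*} [NormedAddCommGroup V] [NormedSpace ℂ V]
    [NeBot l] {F : ι → V → ℂ} {f : V → ℂ} {U : Set V} (hU : IsOpen U) (hUc : Convex ℝ U)
    (hF : ∀ᶠ j in l, DifferentiableOn ℂ (F j) U) (hne : ∀ᶠ j in l, ∀ y ∈ U, F j y ≠ 0)
    (hf : TendstoLocallyUniformlyOn F f l U) {z : V} (hz : z ∈ U) (hfz : f z = 0) :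
    Set.EqOn f 0 U := by
  intro w hw
  let L : ℂ → V := fun ζ => z + ζ • (w - z)
  have hL : Differentiable ℂ L := by fun_prop
  have hconv : Convex ℝ (L ⁻¹' U) := (hUc.translate_preimage_right z).linear_preimage
    ((LinearMap.toSpanSingleton ℂ V (w - z)).restrictScalars ℝ)
  have hzero : Set.EqOn (f ∘ L) 0 (L ⁻¹' U) := eqOn_zero_of_tendstoLocallyUniformlyOn_complex
    (F := fun j => F j ∘ L) (hU.preimage hL.continuous) hconv.isPreconnected
    (hF.mono fun j hj => hj.comp hL.differentiableOn fun _ h => h)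
    (hne.mono fun j hj y hy => hj _ hy) (hf.comp L (fun _ h => h) hL.continuous.continuousOn)
    (w := 0) (by simpa [L] using hz) (by simpa [L] using hfz)
  simpa [L] using hzero (show (1 : ℂ) ∈ L ⁻¹' U by simpa [L] using hw)

end Hurwitz

section SphericalDerivative

variable {ι : Type*} {V : Type} [NormedAddCommGroup V] [NormedSpace ℂ V] {l : Filter ι}

lemma sphDeriv_le_norm_fderiv (f : V → ℂ) (z : V) : sphDeriv f z ≤ ‖fderiv ℂ f z‖ :=
  div_le_self (norm_nonneg _) (le_add_of_nonneg_right (sq_nonneg _))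

lemma sphDeriv_inv {f : V → ℂ} {z : V} (hf : DifferentiableAt ℂ f z) (hz : f z ≠ 0) :
    sphDeriv (fun y => (f y)⁻¹) z = sphDeriv f z := by
  have hinv : HasFDerivAt (fun y => (f y)⁻¹) (-(f z ^ 2)⁻¹ • fderiv ℂ f z) z :=
    (hasDerivAt_inv hz).comp_hasFDerivAt z hf.hasFDerivAt
  have := norm_ne_zero_iff.2 hz
  rw [sphDeriv, sphDeriv, hinv.fderiv, norm_smul, norm_neg, norm_inv, norm_pow, norm_inv]
  field_simp
  ring

lemma exists_eventually_sphDeriv_le_of_norm_le {F : ι → V → ℂ} {z : V} {B : ℝ}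
    (hF : ∀ᶠ p in l ×ˢ 𝓝 z, DifferentiableAt ℂ (F p.1) p.2)
    (hB : ∀ᶠ p in l ×ˢ 𝓝 z, ‖F p.1 p.2‖ ≤ B) :
    ∃ C, ∀ᶠ p in l ×ˢ 𝓝 z, sphDeriv (F p.1) p.2 ≤ C := by
  obtain ⟨r, hr, -, hrB⟩ := exists_ball_eventually_forall
    (Q := fun j y => DifferentiableAt ℂ (F j) y ∧ ‖F j y‖ ≤ B) univ_mem (hF.and hB)
  refine ⟨2 * B / (r / 2), ?_⟩
  filter_upwards [hrB.prod_mk (ball_mem_nhds z (half_pos hr))] with p ⟨hp, hpz⟩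
  have hsub : ball p.2 (r / 2) ⊆ ball z r := ball_subset_ball' (by linarith [mem_ball.1 hpz])
  exact (sphDeriv_le_norm_fderiv _ _).trans <| norm_fderiv_le_of_forall_mem_ball_norm_le
    (half_pos hr) (fun y hy => (hp y (hsub hy)).1.differentiableWithinAt)
    fun y hy => (hp y (hsub hy)).2

lemma exists_eventually_sphDeriv_le_of_tendsto_nhds {F : ι → V → ℂ} {z : V} {c : ℂ}
    (hF : ∀ᶠ p in l ×ˢ 𝓝 z, DifferentiableAt ℂ (F p.1) p.2)
    (hc : Tendsto (fun p : ι × V => F p.1 p.2) (l ×ˢ 𝓝 z) (𝓝 c)) :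
    ∃ C, ∀ᶠ p in l ×ˢ 𝓝 z, sphDeriv (F p.1) p.2 ≤ C :=
  exists_eventually_sphDeriv_le_of_norm_le hF
    (hc.norm.eventually (ge_mem_nhds (lt_add_one ‖c‖)))

lemma exists_eventually_sphDeriv_le_of_tendsto_cobounded {F : ι → V → ℂ} {z : V}
    (hF : ∀ᶠ p in l ×ˢ 𝓝 z, DifferentiableAt ℂ (F p.1) p.2)
    (h : Tendsto (fun p : ι × V => F p.1 p.2) (l ×ˢ 𝓝 z) (cobounded ℂ)) :
    ∃ C, ∀ᶠ p in l ×ˢ 𝓝 z, sphDeriv (F p.1) p.2 ≤ C := by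
  have hne : ∀ᶠ p in l ×ˢ 𝓝 z, F p.1 p.2 ≠ 0 := h.eventually_ne_cobounded 0
  obtain ⟨C, hC⟩ := exists_eventually_sphDeriv_le_of_tendsto_nhds
    (F := fun j y => (F j y)⁻¹) ((hF.and hne).mono fun p hp => hp.1.inv hp.2)
    (tendsto_inv₀_cobounded.comp h)
  refine ⟨C, ?_⟩
  filter_upwards [hC, hF, hne] with p hp hFp hp0
  rwa [sphDeriv_inv hFp hp0] at hp

end SphericalDerivative

section Marty

variable {ι X : Type*} {V : Type} [NormedAddCommGroup V] [NormedSpace ℂ V] {l : Filter ι}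

/-- Locally uniform convergence to the point at infinity on `U`, in the form of continuous
convergence at every point of `U`. -/
def DivergesLocallyUniformlyOn [TopologicalSpace X] (F : ι → X → ℂ) (l : Filter ι) (U : Set X) :
    Prop :=
  ∀ z ∈ U, Tendsto (fun p : ι × X => F p.1 p.2) (l ×ˢ 𝓝 z) (cobounded ℂ)

lemma eventually_exists_tendsto_nhds [NeBot l] [PseudoMetricSpace X] {F : ι → X → ℂ} {Ω : Set X}
    {z : X} {c : ℂ} (hΩ : Ω ∈ 𝓝 z) (hlim : ∀ y ∈ Ω,
      (∃ c, Tendsto (fun p : ι × X => F p.1 p.2) (l ×ˢ 𝓝 y) (𝓝 c)) ∨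
        Tendsto (fun p : ι × X => F p.1 p.2) (l ×ˢ 𝓝 y) (cobounded ℂ))
    (hz : Tendsto (fun p : ι × X => F p.1 p.2) (l ×ˢ 𝓝 z) (𝓝 c)) :
    ∀ᶠ y in 𝓝 z, ∃ c, Tendsto (fun p : ι × X => F p.1 p.2) (l ×ˢ 𝓝 y) (𝓝 c) := by
  obtain ⟨r, hr, hrΩ, hrB⟩ := exists_ball_eventually_forall
    (Q := fun j y => ‖F j y‖ ≤ ‖c‖ + 1) hΩ (hz.norm.eventually (ge_mem_nhds (lt_add_one ‖c‖)))
  filter_upwards [ball_mem_nhds z hr] with y hy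
  refine (hlim y (hrΩ hy)).resolve_right fun hinf => ?_
  have hlarge : ∀ᶠ j in l, ‖c‖ + 1 < ‖F j y‖ :=
    (tendsto_norm_cobounded_atTop.comp (tendsto_apply_of_tendsto_prod hinf)).eventually_gt_atTop _
  obtain ⟨j, hj, hj'⟩ := (hlarge.and hrB).exists
  exact (hj' y hy).not_gt hj

lemma eventually_tendsto_cobounded [NeBot l] {F : ι → V → ℂ} {Ω : Set V} {z : V}
    (hΩ : Ω ∈ 𝓝 z) (hF : ∀ᶠ p in l ×ˢ 𝓝 z, DifferentiableAt ℂ (F p.1) p.2) (hlim : ∀ y ∈ Ω,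
      (∃ c, Tendsto (fun p : ι × V => F p.1 p.2) (l ×ˢ 𝓝 y) (𝓝 c)) ∨
        Tendsto (fun p : ι × V => F p.1 p.2) (l ×ˢ 𝓝 y) (cobounded ℂ))
    (hz : Tendsto (fun p : ι × V => F p.1 p.2) (l ×ˢ 𝓝 z) (cobounded ℂ)) :
    ∀ᶠ y in 𝓝 z, Tendsto (fun p : ι × V => F p.1 p.2) (l ×ˢ 𝓝 y) (cobounded ℂ) := by
  have hone : ∀ᶠ p in l ×ˢ 𝓝 z, 1 ≤ ‖F p.1 p.2‖ :=
    (tendsto_norm_cobounded_atTop.comp hz).eventually_ge_atTop 1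
  obtain ⟨r, hr, hrΩ, hrF⟩ := exists_ball_eventually_forall
    (Q := fun j y => DifferentiableAt ℂ (F j) y ∧ 1 ≤ ‖F j y‖) hΩ (hF.and hone)
  have hne : ∀ᶠ j in l, ∀ y ∈ ball z r, F j y ≠ 0 := hrF.mono fun j hj y hy =>
    norm_pos_iff.1 (one_pos.trans_le (hj y hy).2)
  have hne_lim {y : V} (hy : y ∈ ball z r) {c : ℂ}
      (hc : Tendsto (fun p : ι × V => F p.1 p.2) (l ×ˢ 𝓝 y) (𝓝 c)) : c ≠ 0 :=
    norm_pos_iff.1 <| one_pos.trans_le <| ge_of_tendsto (tendsto_apply_of_tendsto_prod hc).norm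
      (hrF.mono fun j hj => (hj y hy).2)
  have hinv (y : V) (hy : y ∈ ball z r) :
      ∃ d, Tendsto (fun p : ι × V => (F p.1 p.2)⁻¹) (l ×ˢ 𝓝 y) (𝓝 d) := by
    rcases hlim y (hrΩ hy) with ⟨c, hc⟩ | hinf
    · exact ⟨c⁻¹, hc.inv₀ (hne_lim hy hc)⟩
    · exact ⟨0, tendsto_inv₀_cobounded.comp hinf⟩
  choose! g hg using hinv
  have hgz : g z = 0 :=
    tendsto_nhds_unique (hg z (mem_ball_self hr)) (tendsto_inv₀_cobounded.comp hz)
  have hg_zero : Set.EqOn g 0 (ball z r) :=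
    eqOn_zero_of_tendstoLocallyUniformlyOn isOpen_ball (convex_ball z r)
      (hrF.mp (hne.mono fun j hj hj' y hy => ((hj' y hy).1.inv (hj y hy)).differentiableWithinAt))
      (hne.mono fun j hj y hy => inv_ne_zero (hj y hy))
      (tendstoLocallyUniformlyOn_of_forall_tendsto_prod hg) (mem_ball_self hr) hgz
  filter_upwards [ball_mem_nhds z hr] with y hy
  refine (hlim y (hrΩ hy)).resolve_left fun ⟨c, hc⟩ => hne_lim hy hc ?_
  rw [← inv_eq_zero, ← tendsto_nhds_unique (hg y hy) (hc.inv₀ (hne_lim hy hc))]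
  exact hg_zero hy

lemma exists_tendstoLocallyUniformlyOn_or_diverges [NeBot l] [ProperSpace V] {F : ι → V → ℂ}
    {Ω : Set V} (hΩ : IsOpen Ω) (hΩc : IsPreconnected Ω)
    (hF : ∀ z ∈ Ω, ∀ᶠ p in l ×ˢ 𝓝 z, DifferentiableAt ℂ (F p.1) p.2)
    (hlim : ∀ z ∈ Ω, (∃ c, Tendsto (fun p : ι × V => F p.1 p.2) (l ×ˢ 𝓝 z) (𝓝 c)) ∨
        Tendsto (fun p : ι × V => F p.1 p.2) (l ×ˢ 𝓝 z) (cobounded ℂ)) :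
    (∃ g, DifferentiableOn ℂ g Ω ∧ TendstoLocallyUniformlyOn F g l Ω) ∨
      DivergesLocallyUniformlyOn F l Ω := by
  set A := {z ∈ Ω | ∃ c, Tendsto (fun p : ι × V => F p.1 p.2) (l ×ˢ 𝓝 z) (𝓝 c)}
  set B := {z ∈ Ω | Tendsto (fun p : ι × V => F p.1 p.2) (l ×ˢ 𝓝 z) (cobounded ℂ)}
  have hA : IsOpen A := isOpen_iff_mem_nhds.2 fun z ⟨hz, c, hc⟩ =>
    inter_mem (hΩ.mem_nhds hz) (eventually_exists_tendsto_nhds (hΩ.mem_nhds hz) hlim hc)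
  have hB : IsOpen B := isOpen_iff_mem_nhds.2 fun z ⟨hz, hinf⟩ =>
    inter_mem (hΩ.mem_nhds hz)
      (eventually_tendsto_cobounded (hΩ.mem_nhds hz) (hF z hz) hlim hinf)
  have hAB : Disjoint A B := Set.disjoint_left.2 fun z ⟨_, c, hc⟩ ⟨_, hinf⟩ =>
    hc.not_tendsto (disjoint_nhds_cobounded c) hinf
  rcases hΩc.subset_or_subset hA hB hAB fun z hz =>
    (hlim z hz).imp (fun h => ⟨hz, h⟩) fun h => ⟨hz, h⟩ with hΩA | hΩB
  · choose! g hg using fun z (hz : z ∈ Ω) => (hΩA hz).2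
    have hloc := tendstoLocallyUniformlyOn_of_forall_tendsto_prod hg
    refine .inl ⟨g, fun z hz => ?_, hloc⟩
    obtain ⟨r, hr, hrΩ, hrF⟩ := exists_ball_eventually_forall
      (Q := fun j y => DifferentiableAt ℂ (F j) y) (hΩ.mem_nhds hz) (hF z hz)
    exact (differentiableOn_of_tendstoLocallyUniformlyOn isOpen_ball
      (hrF.mono fun j hj y hy => (hj y hy).differentiableWithinAt)
      (hloc.mono hrΩ) |>.differentiableAt (ball_mem_nhds z hr)).differentiableWithinAt
  · exact .inr fun z hz => (hΩB hz).2

theorem LocallyBoundedSphDerivOn.exists_subseq_tendsto_or_diverges [ProperSpace V]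
    {F : ℕ → V → ℂ} {Ω : Set V} (hF : LocallyBoundedSphDerivOn F atTop Ω) (hΩ : IsOpen Ω)
    (hΩc : IsPreconnected Ω) :
    ∃ φ : ℕ → ℕ, StrictMono φ ∧
      ((∃ g, DifferentiableOn ℂ g Ω ∧ TendstoLocallyUniformlyOn (fun j => F (φ j)) g atTop Ω) ∨
        DivergesLocallyUniformlyOn (fun j => F (φ j)) atTop Ω) := by
  obtain ⟨φ, hφ, hlim⟩ := hF.exists_subseq_forall_tendsto_nhds_or_cobounded
  exact ⟨φ, hφ, exists_tendstoLocallyUniformlyOn_or_diverges hΩ hΩc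
    (fun z hz => (hF.comp_tendsto hφ.tendsto_atTop).eventually_differentiableAt hz) hlim⟩

theorem locallyBoundedSphDerivOn_of_tendsto {F : ι → V → ℂ} {Ω : Set V} (hΩ : IsOpen Ω)
    (hF : ∀ᶠ j in l, DifferentiableOn ℂ (F j) Ω)
    (h : (∃ g, ContinuousOn g Ω ∧ TendstoLocallyUniformlyOn F g l Ω) ∨
      DivergesLocallyUniformlyOn F l Ω) : LocallyBoundedSphDerivOn F l Ω := by
  intro z hz
  have hdiff : ∀ᶠ p in l ×ˢ 𝓝 z, DifferentiableAt ℂ (F p.1) p.2 :=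
    (hF.prod_mk (hΩ.mem_nhds hz)).mono fun p hp => hp.1.differentiableAt (hΩ.mem_nhds hp.2)
  obtain ⟨C, hC⟩ : ∃ C, ∀ᶠ p in l ×ˢ 𝓝 z, sphDeriv (F p.1) p.2 ≤ C := by
    rcases h with ⟨g, hg, hFg⟩ | hinf
    · exact exists_eventually_sphDeriv_le_of_tendsto_nhds hdiff
        (tendsto_prod_of_tendstoLocallyUniformlyOn hFg hΩ hz (hg.continuousAt (hΩ.mem_nhds hz)))
    · exact exists_eventually_sphDeriv_le_of_tendsto_cobounded hdiff (hinf z hz)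
  exact ⟨C, hdiff.and hC⟩

end Marty

section Rescaling

lemma exists_mem_ball_forall_dist_le_le_two_mul {X : Type*} [PseudoMetricSpace X] [ProperSpace X]
    {x : X} {R : ℝ} (hR : 0 < R) {φ : X → ℝ} (hφ : ContinuousOn φ (closedBall x R))
    (hx : 0 < φ x) :
    ∃ z, dist z x < R ∧ R * φ x ≤ (R - dist z x) * φ z ∧
      ∀ w, dist w z ≤ (R - dist z x) / 2 → φ w ≤ 2 * φ z := by
  obtain ⟨z, hz, hmax⟩ := (isCompact_closedBall x R).exists_isMaxOn
    ⟨x, mem_closedBall_self hR.le⟩ (f := fun z => (R - dist z x) * φ z) (by fun_prop)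
  have hzx : R * φ x ≤ (R - dist z x) * φ z := by
    simpa using hmax (mem_closedBall_self hR.le)
  have hpos : 0 < (R - dist z x) * φ z := (mul_pos hR hx).trans_le hzx
  have hlt : 0 < R - dist z x :=
    (sub_nonneg.2 (mem_closedBall.1 hz)).lt_of_ne fun h => by simp [← h] at hpos
  refine ⟨z, sub_pos.1 hlt, hzx, fun w hw => ?_⟩
  have hwx : (R - dist z x) / 2 ≤ R - dist w x := by linarith [dist_triangle w z x]
  have hwz : (R - dist w x) * φ w ≤ (R - dist z x) * φ z :=
    hmax (mem_closedBall.2 (by linarith))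
  have hφz : 0 < φ z := pos_of_mul_pos_right hpos hlt.le
  by_contra! hφw
  nlinarith

theorem exists_zalcman_rescaling {ι V : Type*} [NormedAddCommGroup V] [NormedSpace ℝ V]
    [ProperSpace V] {l : Filter ι} {x : V} {R : ι → ℝ} (hR : ∀ j, 0 < R j) {φ : ι → V → ℝ}
    (hφ : ∀ j, ContinuousOn (φ j) (closedBall x (R j))) (hx : ∀ j, 0 < φ j x)
    (hlim : Tendsto (fun j => R j * φ j x) l atTop) :
    ∃ (z : ι → V) (ρ : ι → ℝ), (∀ j, z j ∈ ball x (R j)) ∧ (∀ j, 0 < ρ j) ∧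
      (∀ j, ρ j * φ j x ≤ 1) ∧ (∀ j, ρ j * φ j (z j) = 1) ∧
      ∀ w, ∀ᶠ p in l ×ˢ 𝓝 w, z p.1 + ρ p.1 • p.2 ∈ ball x (R p.1) ∧
        ρ p.1 * φ p.1 (z p.1 + ρ p.1 • p.2) ≤ 2 := by
  choose z hzR hz hzφ using fun j =>
    exists_mem_ball_forall_dist_le_le_two_mul (hR j) (hφ j) (hx j)
  have hφz (j : ι) : 0 < φ j (z j) :=
    pos_of_mul_pos_right ((mul_pos (hR j) (hx j)).trans_le (hz j)) (sub_pos.2 (hzR j)).le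
  refine ⟨z, fun j => (φ j (z j))⁻¹, hzR, fun j => inv_pos.2 (hφz j),
    fun j => ?_, fun j => inv_mul_cancel₀ (hφz j).ne', fun w => ?_⟩
  · refine inv_mul_le_one_of_le₀ (le_of_mul_le_mul_left ((hz j).trans ?_) (hR j)) (hφz j).le
    exact mul_le_mul_of_nonneg_right (sub_le_self _ dist_nonneg) (hφz j).le
  filter_upwards [(hlim.eventually_ge_atTop (2 * (‖w‖ + 1))).prod_mk
    (tendsto_norm.eventually (ge_mem_nhds (lt_add_one ‖w‖)))] with ⟨j, y⟩ ⟨hj, hy⟩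
  have hdist : dist (z j + (φ j (z j))⁻¹ • y) (z j) ≤ (R j - dist (z j) x) / 2 := by
    rw [dist_self_add_left, norm_smul, norm_inv, Real.norm_of_nonneg (hφz j).le,
      inv_mul_le_iff₀ (hφz j)]
    linarith [hz j]
  refine ⟨mem_ball.2 ?_, ?_⟩
  · linarith [dist_triangle (z j + (φ j (z j))⁻¹ • y) (z j) x, hzR j]
  · rw [inv_mul_le_iff₀ (hφz j), mul_comm]
    exact hzφ j _ hdist

end Rescaling

section OneVariable

lemma sphDeriv_eq_norm_deriv_div (f : ℂ → ℂ) (z : ℂ) :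
    sphDeriv f z = ‖deriv f z‖ / (1 + ‖f z‖ ^ 2) := by
  rw [sphDeriv, norm_deriv_eq_norm_fderiv]

lemma deriv_comp_affine (f : ℂ → ℂ) (a c x : ℂ) :
    deriv (fun w => f (a + c * w)) x = c * deriv f (a + c * x) := by
  simpa only [deriv_comp_const_add, smul_eq_mul] using
    deriv_comp_mul_left c (fun y => f (a + y)) x

lemma frequently_deriv_ne_zero {f : ℂ → ℂ} (hf : Differentiable ℂ f) (hne : ∃ z, deriv f z ≠ 0)
    (w : ℂ) : ∃ᶠ x in 𝓝 w, deriv f x ≠ 0 := by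
  obtain ⟨z, hz⟩ := hne
  intro h
  have hzero : Set.EqOn (deriv f) 0 Set.univ :=
    AnalyticOnNhd.eqOn_zero_of_preconnected_of_eventuallyEq_zero
      (fun x _ => hf.deriv.analyticAt x) isPreconnected_univ (Set.mem_univ w)
      (h.mono fun x hx => not_not.1 hx)
  exact hz (hzero (Set.mem_univ z))

end OneVariable

section SqDerivEq

/-- `u` and `G` are holomorphic on `U` and satisfy the differential equation `u' ^ 2 = G * P(u)`
there. An entire function that is ramified over the simple roots of `P` satisfies such an equation,
and the class is stable under affine reparametrization, which only changes `G`. -/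
structure SqDerivEqOn (P : ℂ[X]) (G u : ℂ → ℂ) (U : Set ℂ) : Prop where
  differentiableOn : DifferentiableOn ℂ u U
  differentiableOn_coeff : DifferentiableOn ℂ G U
  sq_deriv : ∀ x ∈ U, deriv u x ^ 2 = G x * P.eval (u x)

lemma eval_inv_reflect_mul_pow {P : ℂ[X]} {N : ℕ} (hP : P.natDegree ≤ N) {x : ℂ} (hx : x ≠ 0) :
    (P.reflect N).eval x⁻¹ * x ^ N = P.eval x := by
  have := invertibleOfNonzero hx
  simpa only [invOf_eq_inv, eval₂_id] using eval₂_reflect_mul_pow (RingHom.id ℂ) x N P hP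

lemma exists_forall_norm_eval_le_sq {P : ℂ[X]} (hP : P.natDegree ≤ 4) :
    ∃ C, ∀ x, ‖P.eval x‖ ≤ C * (1 + ‖x‖ ^ 2) ^ 2 := by
  refine ⟨∑ i ∈ Finset.range 5, ‖P.coeff i‖, fun x => ?_⟩
  rw [eval_eq_sum_range' (Nat.lt_succ_of_le hP), Finset.sum_mul]
  refine (norm_sum_le _ _).trans (Finset.sum_le_sum fun i hi => ?_)
  have hpow : ‖x‖ ^ i ≤ (1 + ‖x‖ ^ 2) ^ 2 := by
    rcases le_total ‖x‖ 1 with h | h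
    · exact (pow_le_one₀ (norm_nonneg x) h).trans (one_le_pow₀ (by nlinarith))
    · exact (pow_le_pow_right₀ h (Finset.mem_range_succ_iff.1 hi)).trans
        (by nlinarith [sq_nonneg ‖x‖])
  rw [norm_mul, norm_pow]
  gcongr

lemma two_mul_deriv_deriv_of_sq_deriv_eq {P : ℂ[X]} {G u : ℂ → ℂ} {w : ℂ}
    (hu : AnalyticAt ℂ u w) (hG : AnalyticAt ℂ G w)
    (heq : ∀ᶠ x in 𝓝 w, deriv u x ^ 2 = G x * P.eval (u x))
    (hne : ∃ᶠ x in 𝓝 w, deriv u x ≠ 0) :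
    2 * G w * deriv (deriv u) w
      = deriv G w * deriv u w + G w ^ 2 * P.derivative.eval (u w) := by
  set D : ℂ → ℂ := fun x => 2 * G x * deriv (deriv u) x
    - (deriv G x * deriv u x + G x ^ 2 * P.derivative.eval (u x)) with hD
  have hDcont : ContinuousAt D w := by
    have : ContinuousAt (fun x => P.derivative.eval (u x)) w :=
      P.derivative.continuous.continuousAt.comp hu.continuousAt
    have := hu.deriv.continuousAt
    have := hu.deriv.deriv.continuousAt
    have := hG.deriv.continuousAt
    have := hG.continuousAt
    fun_prop
  have hmul : ∀ᶠ x in 𝓝 w, deriv u x * D x = 0 := by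
    filter_upwards [heq.eventually_nhds, hu.eventually_analyticAt, hG.eventually_analyticAt]
      with x hx hux hGx
    have hleft : HasDerivAt (fun y => deriv u y ^ 2) (2 * deriv u x * deriv (deriv u) x) x := by
      simpa using hux.deriv.differentiableAt.hasDerivAt.fun_pow 2
    have hright : HasDerivAt (fun y => G y * P.eval (u y)) _ x :=
      hGx.differentiableAt.hasDerivAt.mul
        ((P.hasDerivAt (u x)).comp x hux.differentiableAt.hasDerivAt)
    have hderiv := (hleft.congr_of_eventuallyEq (hx.mono fun y hy => hy.symm)).unique hright
    linear_combination G x * hderiv - deriv G x * hx.self_of_nhds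
  by_contra h
  have hDne : D w ≠ 0 := by rwa [hD, sub_ne_zero]
  obtain ⟨x, hx, hux, hDx⟩ := (hne.and_eventually (hmul.and (hDcont.eventually_ne hDne))).exists
  exact mul_ne_zero hx hDx hux

/-- A simple zero of `P` is an equilibrium which nonconstant solutions cannot approach, because
`2 * G * u'' = G' * u' + G ^ 2 * P'(u)` passes to the limit. -/
lemma isRoot_and_isRoot_derivative_of_tendsto_const {ι : Type*} {l : Filter ι} [NeBot l]
    {P : ℂ[X]} {G u : ι → ℂ → ℂ} {U : Set ℂ} {w α : ℂ} {Γ : ℂ → ℂ} (hU : IsOpen U) (hw : w ∈ U)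
    (h : ∀ᶠ j in l, SqDerivEqOn P (G j) (u j) U)
    (hne : ∀ᶠ j in l, ∃ᶠ x in 𝓝 w, deriv (u j) x ≠ 0)
    (hu : TendstoLocallyUniformlyOn u (fun _ => α) l U)
    (hG : TendstoLocallyUniformlyOn G Γ l U) (hΓ : Γ w ≠ 0) :
    P.IsRoot α ∧ P.derivative.IsRoot α := by
  have hu' := hu.deriv (h.mono fun j hj => hj.differentiableOn) hU
  have hu'' := hu'.deriv (h.mono fun j hj => hj.differentiableOn.deriv hU) hU
  have hG' := hG.deriv (h.mono fun j hj => hj.differentiableOn_coeff) hU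
  have limu : Tendsto (fun j => u j w) l (𝓝 α) := hu.tendsto_at hw
  have limu' : Tendsto (fun j => deriv (u j) w) l (𝓝 0) := by simpa using hu'.tendsto_at hw
  have limu'' : Tendsto (fun j => deriv (deriv (u j)) w) l (𝓝 0) := by
    simpa using hu''.tendsto_at hw
  have limG : Tendsto (fun j => G j w) l (𝓝 (Γ w)) := hG.tendsto_at hw
  have limP (Q : ℂ[X]) : Tendsto (fun j => Q.eval (u j w)) l (𝓝 (Q.eval α)) :=
    (Q.continuous.tendsto α).comp limu
  have hfirst : 0 ^ 2 = Γ w * P.eval α :=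
    tendsto_nhds_unique ((limu'.pow 2).congr' (h.mono fun j hj => hj.sq_deriv w hw))
      (limG.mul (limP P))
  have hsecond : 2 * Γ w * 0 = deriv Γ w * 0 + Γ w ^ 2 * P.derivative.eval α := by
    refine tendsto_nhds_unique (((limG.const_mul 2).mul limu'').congr' ?_)
      (((hG'.tendsto_at hw).mul limu').add ((limG.pow 2).mul (limP P.derivative)))
    filter_upwards [h, hne] with j hj hnej
    have hUw := hU.mem_nhds hw
    exact two_mul_deriv_deriv_of_sq_deriv_eq (hj.differentiableOn.analyticAt hUw)
      (hj.differentiableOn_coeff.analyticAt hUw) (by filter_upwards [hUw] using hj.sq_deriv) hnej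
  exact ⟨by simpa [hΓ] using hfirst.symm, by simpa [hΓ] using hsecond.symm⟩

namespace SqDerivEqOn

variable {P : ℂ[X]} {G u : ℂ → ℂ} {U V : Set ℂ}

lemma mono (h : SqDerivEqOn P G u U) (hVU : V ⊆ U) : SqDerivEqOn P G u V :=
  ⟨h.differentiableOn.mono hVU, h.differentiableOn_coeff.mono hVU,
    fun x hx => h.sq_deriv x (hVU hx)⟩

lemma differentiable (h : SqDerivEqOn P G u Set.univ) : Differentiable ℂ u :=
  differentiableOn_univ.1 h.differentiableOn

lemma comp_affine (h : SqDerivEqOn P G u Set.univ) (a c : ℂ) :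
    SqDerivEqOn P (fun w => c ^ 2 * G (a + c * w)) (fun w => u (a + c * w)) Set.univ := by
  have hG : Differentiable ℂ G := differentiableOn_univ.1 h.differentiableOn_coeff
  have hu := h.differentiable
  refine ⟨by fun_prop, by fun_prop, fun x _ => ?_⟩
  rw [deriv_comp_affine, mul_pow, h.sq_deriv _ (Set.mem_univ _), mul_assoc]

lemma inv (h : SqDerivEqOn P G u U) (hU : IsOpen U) (hP : P.natDegree ≤ 4)
    (hne : ∀ x ∈ U, u x ≠ 0) : SqDerivEqOn (P.reflect 4) G (fun x => (u x)⁻¹) U := by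
  refine ⟨h.differentiableOn.fun_inv hne, h.differentiableOn_coeff, fun x hx => ?_⟩
  have hux := hne x hx
  rw [((h.differentiableOn.differentiableAt (hU.mem_nhds hx)).hasDerivAt.fun_inv hux).deriv,
    div_pow, neg_sq, h.sq_deriv x hx, ← eval_inv_reflect_mul_pow hP hux]
  field_simp

lemma sphDeriv_sq_le {C : ℝ} {x : ℂ} (h : SqDerivEqOn P G u U)
    (hC : ∀ y, ‖P.eval y‖ ≤ C * (1 + ‖y‖ ^ 2) ^ 2) (hx : x ∈ U) :
    sphDeriv u x ^ 2 ≤ C * ‖G x‖ := by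
  rw [sphDeriv_eq_norm_deriv_div, div_pow, ← norm_pow, h.sq_deriv x hx, norm_mul,
    div_le_iff₀ (by positivity)]
  calc ‖G x‖ * ‖P.eval (u x)‖ ≤ ‖G x‖ * (C * (1 + ‖u x‖ ^ 2) ^ 2) := by gcongr; exact hC _
    _ = C * ‖G x‖ * (1 + ‖u x‖ ^ 2) ^ 2 := by ring

end SqDerivEqOn

lemma locallyBoundedSphDerivOn_of_sqDerivEqOn {ι : Type*} {l : Filter ι} {P : ℂ[X]}
    (hP : P.natDegree ≤ 4) {G u : ι → ℂ → ℂ} (h : ∀ j, SqDerivEqOn P (G j) (u j) Set.univ)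
    (hG : ∀ w, ∃ B, ∀ᶠ p in l ×ˢ 𝓝 w, ‖G p.1 p.2‖ ≤ B) :
    LocallyBoundedSphDerivOn u l Set.univ := by
  intro w _
  obtain ⟨C, hC⟩ := exists_forall_norm_eval_le_sq hP
  have hC0 : 0 ≤ C := by simpa using (norm_nonneg _).trans (hC 0)
  obtain ⟨B, hB⟩ := hG w
  refine ⟨√(C * B), hB.mono fun p hp => ⟨(h p.1).differentiable p.2, Real.le_sqrt_of_sq_le ?_⟩⟩
  exact ((h p.1).sphDeriv_sq_le hC (Set.mem_univ _)).trans (by gcongr)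

lemma coeff_eq_zero_of_sqDerivEqOn_of_diverges {ι : Type*} {l : Filter ι} [NeBot l] {P : ℂ[X]}
    (hP : P.natDegree ≤ 4) {G u : ι → ℂ → ℂ} {Γ : ℂ → ℂ} {w : ℂ}
    (h : ∀ j, SqDerivEqOn P (G j) (u j) Set.univ) (hne : ∀ j, ∃ x, deriv (u j) x ≠ 0)
    (hG : TendstoLocallyUniformlyOn G Γ l Set.univ) (hΓ : Γ w ≠ 0)
    (hu : DivergesLocallyUniformlyOn u l Set.univ) : P.coeff 3 = 0 := by
  obtain ⟨r, hr, -, hr0⟩ := exists_ball_eventually_forall (Q := fun j y => u j y ≠ 0) univ_mem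
    ((hu w (Set.mem_univ w)).eventually_ne_cobounded 0)
  have hroot := (isRoot_and_isRoot_derivative_of_tendsto_const (P := P.reflect 4)
    (u := fun j x => (u j x)⁻¹) (α := 0) isOpen_ball (mem_ball_self hr)
    (hr0.mono fun j hj => ((h j).mono (Set.subset_univ _)).inv isOpen_ball hP hj)
    (hr0.mono fun j hj => ?_)
    (tendstoLocallyUniformlyOn_of_forall_tendsto_prod fun x _ =>
      tendsto_inv₀_cobounded.comp (hu x (Set.mem_univ x)))
    (hG.mono (Set.subset_univ _)) hΓ).2
  · simpa [IsRoot, ← coeff_zero_eq_eval_zero, coeff_derivative, coeff_reflect] using hroot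
  · refine ((frequently_deriv_ne_zero (h j).differentiable (hne j) w).and_eventually
      (ball_mem_nhds w hr)).mono fun x ⟨hx, hxr⟩ => ?_
    rw [((h j).differentiable x).hasDerivAt.fun_inv (hj x hxr) |>.deriv]
    exact div_ne_zero (neg_ne_zero.2 hx) (pow_ne_zero 2 (hj x hxr))

lemma exists_subseq_tendsto_of_sqDerivEqOn {P : ℂ[X]} (hPsep : P.Separable)
    (hPdeg : P.natDegree = 3) {G u : ℕ → ℂ → ℂ} {Γ : ℂ}
    (h : ∀ j, SqDerivEqOn P (G j) (u j) Set.univ) (hne : ∀ j, ∃ x, deriv (u j) x ≠ 0)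
    (hG : TendstoLocallyUniformlyOn G (fun _ => Γ) atTop Set.univ) (hΓ : Γ ≠ 0) :
    ∃ (φ : ℕ → ℕ) (v : ℂ → ℂ), StrictMono φ ∧
      TendstoLocallyUniformlyOn (fun j => u (φ j)) v atTop Set.univ ∧
      SqDerivEqOn P (fun _ => Γ) v Set.univ ∧ ∃ x, deriv v x ≠ 0 := by
  have hGbdd (w : ℂ) : ∃ B, ∀ᶠ p in atTop ×ˢ 𝓝 w, ‖G p.1 p.2‖ ≤ B :=
    ⟨‖Γ‖ + 1, (tendsto_prod_of_tendstoLocallyUniformlyOn hG isOpen_univ (Set.mem_univ w)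
      continuousAt_const).norm.eventually (ge_mem_nhds (lt_add_one _))⟩
  obtain ⟨φ, hφ, hlim⟩ := (locallyBoundedSphDerivOn_of_sqDerivEqOn (by lia) h
    hGbdd).exists_subseq_tendsto_or_diverges isOpen_univ isPreconnected_univ
  have hGφ : TendstoLocallyUniformlyOn (fun j => G (φ j)) (fun _ => Γ) atTop Set.univ :=
    fun V hV x hx => (hG V hV x hx).imp fun t ht => ⟨ht.1, hφ.tendsto_atTop.eventually ht.2⟩
  rcases hlim with ⟨v, hv, hu⟩ | hu
  · have hu' := hu.deriv (.of_forall fun j => (h (φ j)).differentiableOn) isOpen_univ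
    have hsq (x : ℂ) (hx : x ∈ Set.univ) : deriv v x ^ 2 = Γ * P.eval (v x) :=
      tendsto_nhds_unique (((hu'.tendsto_at hx).pow 2).congr fun j => (h (φ j)).sq_deriv x hx)
        ((hGφ.tendsto_at hx).mul ((P.continuous.tendsto _).comp (hu.tendsto_at hx)))
    refine ⟨φ, v, hφ, hu, ⟨hv, differentiableOn_const Γ, hsq⟩, ?_⟩
    by_contra! hv'
    have hconst : v = fun _ => v 0 :=
      funext fun x => is_const_of_deriv_eq_zero (differentiableOn_univ.1 hv) hv' x 0
    rw [hconst] at hu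
    obtain ⟨hroot, hroot'⟩ := isRoot_and_isRoot_derivative_of_tendsto_const isOpen_univ
      (Set.mem_univ 0) (.of_forall fun j => h (φ j))
      (.of_forall fun j => frequently_deriv_ne_zero (h (φ j)).differentiable (hne _) 0) hu hGφ hΓ
    exact hPsep.eval₂_derivative_ne_zero (RingHom.id ℂ) hroot hroot'
  · have hcoeff := coeff_eq_zero_of_sqDerivEqOn_of_diverges (w := 0) (by lia)
      (fun j => h (φ j)) (fun j => hne (φ j)) hGφ hΓ hu
    rw [← hPdeg, coeff_natDegree, leadingCoeff_eq_zero] at hcoeff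
    simp [hcoeff] at hPdeg

lemma deriv_eq_zero_of_isBounded_range {f : ℂ → ℂ} (hf : Differentiable ℂ f)
    (hb : IsBounded (Set.range f)) (z : ℂ) : deriv f z = 0 := by
  obtain ⟨c, hc⟩ := hf.exists_eq_const_of_bounded hb
  rw [hc]
  exact deriv_const z c

theorem SqDerivEqOn.deriv_eq_zero_of_const {P : ℂ[X]} (hPsep : P.Separable)
    (hPdeg : P.natDegree = 3) {Γ : ℂ} {u : ℂ → ℂ} (hΓ : Γ ≠ 0)
    (h : SqDerivEqOn P (fun _ => Γ) u Set.univ) (x : ℂ) : deriv u x = 0 := by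
  refine deriv_eq_zero_of_isBounded_range h.differentiable ?_ x
  by_contra hb
  have hlarge (j : ℕ) : ∃ z, j < ‖u z‖ := by
    by_contra! hj
    exact hb (isBounded_iff_forall_norm_le.2 ⟨j, Set.forall_mem_range.2 hj⟩)
  choose z hz using hlarge
  have hne : ∃ y, deriv u y ≠ 0 := by
    by_contra! hu'
    refine hb ((isBounded_singleton (x := u 0)).subset ?_)
    exact Set.range_subset_iff.2 fun y => is_const_of_deriv_eq_zero h.differentiable hu' y 0
  obtain ⟨φ, v, hφ, hv, -⟩ := exists_subseq_tendsto_of_sqDerivEqOn hPsep hPdeg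
    (G := fun _ _ => Γ) (u := fun j w => u (z j + w)) (Γ := Γ)
    (fun j => by simpa using h.comp_affine (z j) 1)
    (fun j => hne.imp' (fun y => y - z j) fun y hy => by simpa [deriv_comp_const_add] using hy)
    (tendstoLocallyUniformlyOn_of_forall_tendsto_prod fun x _ => tendsto_const_nhds) hΓ
  have hfinite : Tendsto (fun j => ‖u (z (φ j))‖) atTop (𝓝 ‖v 0‖) := by
    simpa using (hv.tendsto_at (Set.mem_univ 0)).norm
  exact not_tendsto_nhds_of_tendsto_atTop (tendsto_atTop_mono (fun j => (hz (φ j)).le)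
    (tendsto_natCast_atTop_atTop.comp hφ.tendsto_atTop)) _ hfinite

theorem exists_forall_deriv_eq_zero_of_sqDerivEqOn {P : ℂ[X]} (hPsep : P.Separable)
    (hPdeg : P.natDegree = 3) {G u : ℕ → ℂ → ℂ} {B : ℝ}
    (h : ∀ j, SqDerivEqOn P (G j) (u j) Set.univ) (hG0 : ∀ j, ‖G j 0‖ = 1)
    (hGB : ∀ w, ∀ᶠ p in atTop ×ˢ 𝓝 w, ‖G p.1 p.2‖ ≤ B) :
    ∃ j, ∀ x, deriv (u j) x = 0 := by
  by_contra! hne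
  have hGdiff (j : ℕ) : Differentiable ℂ (G j) :=
    differentiableOn_univ.1 (h j).differentiableOn_coeff
  have hGsph : LocallyBoundedSphDerivOn G atTop Set.univ := fun w _ =>
    (exists_eventually_sphDeriv_le_of_norm_le (.of_forall fun p => hGdiff p.1 p.2) (hGB w)).imp
      fun C hC => hC.mono fun p hp => ⟨hGdiff p.1 p.2, hp⟩
  obtain ⟨φ, hφ, ⟨Γ, hΓ, hGΓ⟩ | hinf⟩ :=
    hGsph.exists_subseq_tendsto_or_diverges isOpen_univ isPreconnected_univ
  · have hΓB (w : ℂ) : ‖Γ w‖ ≤ B := le_of_tendsto (hGΓ.tendsto_at (Set.mem_univ w)).norm <|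
      hφ.tendsto_atTop.eventually <| (hGB w).curry.mono fun j hj => hj.self_of_nhds
    obtain ⟨c, rfl⟩ := (differentiableOn_univ.1 hΓ).exists_eq_const_of_bounded
      (isBounded_iff_forall_norm_le.2 ⟨B, Set.forall_mem_range.2 hΓB⟩)
    have hc : c ≠ 0 := by
      have hlim : Tendsto (fun j => ‖G (φ j) 0‖) atTop (𝓝 ‖c‖) :=
        (hGΓ.tendsto_at (Set.mem_univ 0)).norm
      simp only [hG0] at hlim
      exact norm_pos_iff.1 (tendsto_nhds_unique tendsto_const_nhds hlim ▸ one_pos)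
    obtain ⟨-, v, -, -, hv, x, hx⟩ := exists_subseq_tendsto_of_sqDerivEqOn hPsep hPdeg
      (fun j => h (φ j)) (fun j => hne (φ j)) hGΓ hc
    exact hx (hv.deriv_eq_zero_of_const hPsep hPdeg hc x)
  · have hlim := tendsto_norm_cobounded_atTop.comp
      (tendsto_apply_of_tendsto_prod (F := fun j => G (φ j)) (hinf 0 (Set.mem_univ 0)))
    obtain ⟨j, hj⟩ := (hlim.eventually_gt_atTop 1).exists
    exact hj.ne' (hG0 (φ j))

end SqDerivEq

section TotallyRamified

lemma meromorphicOrderAt_div_nonneg {𝕜 : Type*} [NontriviallyNormedField 𝕜] {f g : 𝕜 → 𝕜} {x : 𝕜}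
    (hf : AnalyticAt 𝕜 f x) (hg : AnalyticAt 𝕜 g x) (hgtop : analyticOrderAt g x ≠ ⊤)
    (hgf : analyticOrderAt g x ≤ analyticOrderAt f x) : 0 ≤ meromorphicOrderAt (f / g) x := by
  rw [meromorphicOrderAt_div hf.meromorphicAt hg.meromorphicAt, hf.meromorphicOrderAt_eq,
    hg.meromorphicOrderAt_eq]
  lift analyticOrderAt g x to ℕ using hgtop with m
  generalize analyticOrderAt f x = n at hgf
  cases n with
  | top => simp
  | coe n =>
    have hmn := Nat.cast_le.1 hgf
    simp only [ENat.map_natCast]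
    exact_mod_cast sub_nonneg.2 (Nat.cast_le (α := ℤ).2 hmn)

lemma exists_differentiable_mul_eq_of_analyticOrderAt_le {p q : ℂ → ℂ} (hp : Differentiable ℂ p)
    (hq : Differentiable ℂ q) (hpq : ∀ x, analyticOrderAt p x ≤ analyticOrderAt q x) :
    ∃ G, Differentiable ℂ G ∧ ∀ x, q x = G x * p x := by
  have hmer : MeromorphicOn (q / p) Set.univ := fun x _ =>
    (hq.analyticAt x).meromorphicAt.div (hp.analyticAt x).meromorphicAt
  by_cases hp0 : ∃ x, p x ≠ 0
  swap
  · push Not at hp0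
    refine ⟨0, differentiable_const 0, fun x => ?_⟩
    have hpx : analyticOrderAt p x = ⊤ := analyticOrderAt_eq_top.2 (.of_forall hp0)
    have hqx : ∀ᶠ y in 𝓝 x, q y = 0 := analyticOrderAt_eq_top.1 (top_le_iff.1 (hpx ▸ hpq x))
    simpa using hqx.self_of_nhds
  obtain ⟨y, hy⟩ := hp0
  have hptop (x : ℂ) : analyticOrderAt p x ≠ ⊤ :=
    AnalyticOnNhd.analyticOrderAt_ne_top_of_isPreconnected (fun x _ => hp.analyticAt x)
      isPreconnected_univ (Set.mem_univ y) (Set.mem_univ x)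
      (((hp.analyticAt y).analyticOrderAt_eq_zero.2 hy).trans_ne ENat.zero_ne_top)
  have hpne (x : ℂ) : ∀ᶠ y in 𝓝[≠] x, p y ≠ 0 :=
    (hp.analyticAt x).eventually_eq_zero_or_eventually_ne_zero.resolve_left
      (analyticOrderAt_eq_top.not.1 (hptop x))
  have hG (x : ℂ) : AnalyticAt ℂ (toMeromorphicNFOn (q / p) Set.univ) x := by
    rw [← (meromorphicNFOn_toMeromorphicNFOn (q / p) Set.univ
      (Set.mem_univ x)).meromorphicOrderAt_nonneg_iff_analyticAt,
      meromorphicOrderAt_toMeromorphicNFOn hmer (Set.mem_univ x)]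
    exact meromorphicOrderAt_div_nonneg (hq.analyticAt x) (hp.analyticAt x) (hptop x) (hpq x)
  refine ⟨_, fun x => (hG x).differentiableAt, fun x => ?_⟩
  refine tendsto_nhds_unique ((hq x).continuousAt.tendsto.mono_left nhdsWithin_le_nhds)
    (((((hG x).continuousAt.mul (hp x).continuousAt).tendsto).mono_left
      (nhdsWithin_le_nhds (s := {x}ᶜ))).congr' ?_)
  filter_upwards [hmer.toMeromorphicNFOn_eq_self_on_nhdsNE (Set.mem_univ x), hpne x] with y hy hpy
  rw [Pi.mul_apply, hy, Pi.div_apply, div_mul_cancel₀ _ hpy]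

lemma analyticOrderAt_eval_comp_le_analyticOrderAt_sq_deriv {P : ℂ[X]} (hP : P.Separable)
    {h : ℂ → ℂ} {x : ℂ} (hh : AnalyticAt ℂ h x) (hx : P.eval (h x) = 0 → deriv h x = 0) :
    analyticOrderAt (fun y => P.eval (h y)) x ≤ analyticOrderAt (fun y => deriv h y ^ 2) x := by
  have hP' (Q : ℂ[X]) : AnalyticAt ℂ (fun y => Q.eval (h y)) x :=
    (AnalyticOnNhd.eval_polynomial Q _ (Set.mem_univ (h x))).comp hh
  by_cases hPx : P.eval (h x) = 0
  swap
  · rw [(hP' P).analyticOrderAt_eq_zero.2 hPx]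
    exact zero_le
  have hderiv : deriv (fun y => P.eval (h y)) =ᶠ[𝓝 x]
      (fun y => P.derivative.eval (h y)) * deriv h :=
    hh.eventually_analyticAt.mono fun y hy =>
      ((P.hasDerivAt (h y)).comp y hy.differentiableAt.hasDerivAt).deriv
  have hP'x : P.derivative.eval (h x) ≠ 0 := hP.eval₂_derivative_ne_zero (RingHom.id ℂ) hPx
  have horder : analyticOrderAt (fun y => P.eval (h y)) x = analyticOrderAt (deriv h) x + 1 := by
    have := (hP' P).analyticOrderAt_deriv_add_one
    simp only [hPx, sub_zero] at this
    rw [← this, analyticOrderAt_congr hderiv, analyticOrderAt_mul (hP' _) hh.deriv,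
      (hP' P.derivative).analyticOrderAt_eq_zero.2 hP'x, zero_add]
  have hone : 1 ≤ analyticOrderAt (deriv h) x :=
    Order.one_le_iff_ne_zero.2 (hh.deriv.analyticOrderAt_ne_zero.2 (hx hPx))
  calc analyticOrderAt (fun y => P.eval (h y)) x
      ≤ analyticOrderAt (deriv h) x + analyticOrderAt (deriv h) x := by
        rw [horder]; gcongr
    _ = analyticOrderAt (fun y => deriv h y ^ 2) x := by
        rw [← two_nsmul]
        exact (analyticOrderAt_pow hh.deriv 2).symm

lemma exists_separable_natDegree_eq_three {E : Set ℂ} (hE : 3 ≤ E.encard) :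
    ∃ P : ℂ[X], P.Separable ∧ P.natDegree = 3 ∧ ∀ a, P.eval a = 0 → a ∈ E := by
  obtain ⟨S, hSE, hS⟩ := Set.exists_subset_encard_eq hE
  have hfin : S.Finite := Set.finite_of_encard_eq_coe hS
  lift S to Finset ℂ using hfin
  rw [Set.encard_coe_eq_coe_finsetCard] at hS
  refine ⟨∏ a ∈ S, (X - C a), separable_prod_X_sub_C_iff'.2 fun _ _ _ _ => id, ?_, fun a ha => ?_⟩
  · rw [natDegree_finsetProd_X_sub_C_eq_card]
    exact_mod_cast hS
  · obtain ⟨b, hb, hab⟩ := Finset.prod_eq_zero_iff.1 (eval_prod S _ a ▸ ha)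
    rw [eval_sub, eval_X, eval_C, sub_eq_zero] at hab
    exact hSE (hab ▸ hb)

theorem deriv_eq_zero_of_totallyRamified {E : Set ℂ} (hE : 3 ≤ E.encard) {h : ℂ → ℂ}
    (hh : Differentiable ℂ h) (hram : ∀ w, h w ∈ E → deriv h w = 0) (w : ℂ) :
    deriv h w = 0 := by
  by_contra hw
  obtain ⟨P, hPsep, hPdeg, hPE⟩ := exists_separable_natDegree_eq_three hE
  obtain ⟨G, hG, hGP⟩ := exists_differentiable_mul_eq_of_analyticOrderAt_le
    (P.differentiable.comp hh) (hh.deriv.pow 2) fun x =>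
      analyticOrderAt_eval_comp_le_analyticOrderAt_sq_deriv hPsep (hh.analyticAt x)
        fun hx => hram x (hPE _ hx)
  have hode : SqDerivEqOn P G h Set.univ :=
    ⟨hh.differentiableOn, hG.differentiableOn, fun x _ => hGP x⟩
  have hGw : G w ≠ 0 := fun h0 => hw (pow_eq_zero_iff two_ne_zero |>.1 (by simpa [h0] using hGP w))
  obtain ⟨z, ρ, -, hρ, -, hρ1, hbdd⟩ := exists_zalcman_rescaling (l := atTop) (x := w)
    (φ := fun _ x => √‖G x‖) (R := fun j : ℕ => (j : ℝ) + 1) (fun j => by positivity)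
    (fun _ => hG.continuous.norm.sqrt.continuousOn) (fun _ => by positivity)
    ((tendsto_natCast_atTop_atTop.atTop_add tendsto_const_nhds).atTop_mul_const (by positivity))
  have hnorm (j : ℕ) (y : ℂ) :
      ‖(ρ j : ℂ) ^ 2 * G (z j + ρ j * y)‖ = (ρ j * √‖G (z j + ρ j * y)‖) ^ 2 := by
    rw [mul_pow, Real.sq_sqrt (norm_nonneg _), norm_mul, norm_pow, Complex.norm_real,
      Real.norm_of_nonneg (hρ j).le]
  obtain ⟨j, hj⟩ := exists_forall_deriv_eq_zero_of_sqDerivEqOn hPsep hPdeg (B := 4)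
    (fun j => hode.comp_affine (z j) (ρ j)) (fun j => by simpa [hρ1] using hnorm j 0) fun y =>
      (hbdd y).mono fun p hp => by
        have hp2 := hp.2
        rw [Complex.real_smul] at hp2
        calc _ = _ := hnorm p.1 p.2
          _ ≤ 2 ^ 2 := pow_le_pow_left₀ (mul_nonneg (hρ p.1).le (Real.sqrt_nonneg _)) hp2 2
          _ = 4 := by norm_num
  have hρj : (ρ j : ℂ) ≠ 0 := Complex.ofReal_ne_zero.2 (hρ j).ne'
  have hzero := hj ((w - z j) / ρ j)
  rw [deriv_comp_affine, mul_div_cancel₀ _ hρj, add_sub_cancel] at hzero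
  exact mul_ne_zero hρj hw hzero

end TotallyRamified

section Lappan

lemma tendsto_sphDeriv_of_tendstoLocallyUniformlyOn {ι : Type*} {l : Filter ι} [NeBot l]
    {k : ι → ℂ → ℂ} {h : ℂ → ℂ} {U : Set ℂ} {w : ℂ} (hU : IsOpen U) (hw : w ∈ U)
    (hk : ∀ᶠ j in l, DifferentiableOn ℂ (k j) U) (hh : TendstoLocallyUniformlyOn k h l U) :
    Tendsto (fun p : ι × ℂ => sphDeriv (k p.1) p.2) (l ×ˢ 𝓝 w) (𝓝 (sphDeriv h w)) := by
  have hhU := hh.differentiableOn hk hU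
  have hval := tendsto_prod_of_tendstoLocallyUniformlyOn hh hU hw
    (hhU.continuousOn.continuousAt (hU.mem_nhds hw))
  have hderiv := tendsto_prod_of_tendstoLocallyUniformlyOn (hh.deriv hk hU) hU hw
    ((hhU.deriv hU).continuousOn.continuousAt (hU.mem_nhds hw))
  simp only [sphDeriv_eq_norm_deriv_div]
  exact hderiv.norm.div ((hval.norm.pow 2).const_add 1) (by positivity)

lemma tendsto_sphDeriv_of_tendsto_cobounded {ι : Type*} {l : Filter ι} [NeBot l]
    {k : ι → ℂ → ℂ} {U : Set ℂ} {w : ℂ} (hU : IsOpen U) (hw : w ∈ U)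
    (hk : ∀ᶠ j in l, DifferentiableOn ℂ (k j) U) (hdiv : DivergesLocallyUniformlyOn k l U) :
    Tendsto (fun p : ι × ℂ => sphDeriv (k p.1) p.2) (l ×ˢ 𝓝 w) (𝓝 0) := by
  obtain ⟨r, hr, hrU, hr0⟩ := exists_ball_eventually_forall (Q := fun j y => k j y ≠ 0)
    (hU.mem_nhds hw) ((hdiv w hw).eventually_ne_cobounded 0)
  have hinv : TendstoLocallyUniformlyOn (fun j y => (k j y)⁻¹) (fun _ => 0) l (ball w r) :=
    tendstoLocallyUniformlyOn_of_forall_tendsto_prod fun x hx =>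
      tendsto_inv₀_cobounded.comp (hdiv x (hrU hx))
  have hlim := tendsto_sphDeriv_of_tendstoLocallyUniformlyOn isOpen_ball (mem_ball_self hr)
    ((hk.and hr0).mono fun j hj => (hj.1.mono hrU).fun_inv hj.2) hinv
  rw [show sphDeriv (fun _ : ℂ => (0 : ℂ)) w = 0 by simp [sphDeriv]] at hlim
  refine hlim.congr' ?_
  filter_upwards [(hk.and hr0).prod_mk (ball_mem_nhds w hr)] with p ⟨hp, hpw⟩
  exact sphDeriv_inv (hp.1.differentiableAt (hU.mem_nhds (hrU hpw))) (hp.2 _ hpw)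

lemma deriv_eq_zero_of_tendsto_of_ramified {ι : Type*} {l : Filter ι} [NeBot l]
    {k : ι → ℂ → ℂ} {h : ℂ → ℂ} {U E : Set ℂ} {w : ℂ} {ε : ι → ℝ} (hU : IsOpen U) (hw : w ∈ U)
    (hk : ∀ᶠ j in l, DifferentiableOn ℂ (k j) U) (hh : TendstoLocallyUniformlyOn k h l U)
    (hε : Tendsto ε l (𝓝 0))
    (hram : ∀ᶠ p in l ×ˢ 𝓝 w, k p.1 p.2 ∈ E → sphDeriv (k p.1) p.2 ≤ ε p.1) (hE : h w ∈ E) :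
    deriv h w = 0 := by
  by_contra hne
  have hpos : 0 < sphDeriv h w := by
    rw [sphDeriv_eq_norm_deriv_div]
    positivity
  have homit : ∀ᶠ p in l ×ˢ 𝓝 w, k p.1 p.2 ∉ E := by
    filter_upwards [hram, (tendsto_sphDeriv_of_tendstoLocallyUniformlyOn hU hw hk
      hh).eventually_const_lt (half_lt_self hpos),
      tendsto_fst.eventually (hε.eventually_lt_const (half_pos hpos))] with p hp hlow hsmall hpE
    exact (hp hpE).not_gt (hsmall.trans hlow)
  obtain ⟨r, hr, hrU, hrE⟩ := exists_ball_eventually_forall (Q := fun j y => k j y ∉ E)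
    (hU.mem_nhds hw) homit
  have hconst : Set.EqOn (fun y => h y - h w) 0 (ball w r) :=
    eqOn_zero_of_tendstoLocallyUniformlyOn_complex isOpen_ball (convex_ball w r).isPreconnected
      (F := fun j y => k j y - h w) (l := l)
      (hk.mono fun j hj => (hj.mono hrU).sub_const _)
      (hrE.mono fun j hj y hy h0 => hj y hy (sub_eq_zero.1 h0 ▸ hE))
      (((uniformContinuous_id.sub uniformContinuous_const).comp_tendstoLocallyUniformlyOn hh).mono
        hrU) (mem_ball_self hr) (sub_self _)
  have hloc : h =ᶠ[𝓝 w] fun _ => h w :=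
    mem_of_superset (ball_mem_nhds w hr) fun y hy => sub_eq_zero.1 (hconst hy)
  exact hne (by rw [hloc.deriv_eq, deriv_const])

theorem exists_subseq_tendsto_sphDeriv_zero {E : Set ℂ} (hE : 3 ≤ E.encard) {k : ℕ → ℂ → ℂ}
    {ε : ℕ → ℝ} (hε : Tendsto ε atTop (𝓝 0)) (hk : LocallyBoundedSphDerivOn k atTop Set.univ)
    (hram : ∀ w, ∀ᶠ p in atTop ×ˢ 𝓝 w, k p.1 p.2 ∈ E → sphDeriv (k p.1) p.2 ≤ ε p.1) (w : ℂ) :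
    ∃ φ : ℕ → ℕ, StrictMono φ ∧ Tendsto (fun j => sphDeriv (k (φ j)) w) atTop (𝓝 0) := by
  obtain ⟨φ, hφ, hlim⟩ := hk.exists_subseq_tendsto_or_diverges isOpen_univ isPreconnected_univ
  have hdiff (x : ℂ) : ∃ r > 0, ∀ᶠ j in atTop, DifferentiableOn ℂ (k (φ j)) (ball x r) := by
    obtain ⟨r, hr, -, hrk⟩ := exists_ball_eventually_forall
      (Q := fun j y => DifferentiableAt ℂ (k (φ j)) y) univ_mem
      ((hk.comp_tendsto hφ.tendsto_atTop).eventually_differentiableAt (Set.mem_univ x))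
    exact ⟨r, hr, hrk.mono fun j hj y hy => (hj y hy).differentiableWithinAt⟩
  obtain ⟨r, hr, hkr⟩ := hdiff w
  refine ⟨φ, hφ, tendsto_apply_of_tendsto_prod (F := fun j => sphDeriv (k (φ j))) ?_⟩
  rcases hlim with ⟨h, hh, hlim⟩ | hlim
  · have hderiv (x : ℂ) (hx : h x ∈ E) : deriv h x = 0 := by
      obtain ⟨s, hs, hks⟩ := hdiff x
      exact deriv_eq_zero_of_tendsto_of_ramified (k := fun j => k (φ j)) isOpen_ball
        (mem_ball_self hs) hks
        (hlim.mono (Set.subset_univ _)) (hε.comp hφ.tendsto_atTop)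
        ((hφ.tendsto_atTop.prodMap tendsto_id).eventually (hram x)) hx
    have hzero : sphDeriv h w = 0 := by
      rw [sphDeriv_eq_norm_deriv_div,
        deriv_eq_zero_of_totallyRamified hE (differentiableOn_univ.1 hh) hderiv, norm_zero,
        zero_div]
    rw [← hzero]
    exact tendsto_sphDeriv_of_tendstoLocallyUniformlyOn (k := fun j => k (φ j)) isOpen_ball
      (mem_ball_self hr) hkr (hlim.mono (Set.subset_univ _))
  · exact tendsto_sphDeriv_of_tendsto_cobounded (k := fun j => k (φ j)) isOpen_ball
      (mem_ball_self hr) hkr fun x _ => hlim x (Set.mem_univ x)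

theorem exists_sphDeriv_le_of_forall_mem_closedBall {E : Set ℂ} (hE : 3 ≤ E.encard) {r : ℝ}
    (hr : 0 < r) (x : ℂ) (M : ℝ) :
    ∃ C, ∀ g : ℂ → ℂ, AnalyticOnNhd ℂ g (closedBall x r) →
      (∀ z ∈ closedBall x r, g z ∈ E → sphDeriv g z ≤ M) → sphDeriv g x ≤ C := by
  by_contra! h
  choose g hg hM hbig using fun j : ℕ => h (j + 1)
  have hgx (j : ℕ) : 0 < sphDeriv (g j) x := (Nat.cast_add_one_pos j).trans (hbig j)
  have hcont (j : ℕ) : ContinuousOn (sphDeriv (g j)) (closedBall x r) := by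
    simp only [funext (sphDeriv_eq_norm_deriv_div (g j))]
    exact (hg j).deriv.continuousOn.norm.div
      (((hg j).continuousOn.norm.pow 2).const_add 1) fun z _ => by positivity
  obtain ⟨z, ρ, -, hρ, hρx, hρz, hbdd⟩ := exists_zalcman_rescaling (l := atTop) (R := fun _ => r)
    (fun _ => hr) hcont hgx (Tendsto.const_mul_atTop hr <|
      tendsto_atTop_mono (fun j => ((lt_add_one _).trans (hbig j)).le) tendsto_natCast_atTop_atTop)
  have hρ0 : Tendsto ρ atTop (𝓝 0) := by
    refine squeeze_zero (fun j => (hρ j).le) (fun j => ?_) tendsto_one_div_add_atTop_nhds_zero_nat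
    rw [le_div_iff₀ (Nat.cast_add_one_pos j)]
    exact (mul_le_mul_of_nonneg_left (hbig j).le (hρ j).le).trans (hρx j)
  have hscale (j : ℕ) (w : ℂ) :
      sphDeriv (fun y => g j (z j + ρ j * y)) w = ρ j * sphDeriv (g j) (z j + ρ j * w) := by
    rw [sphDeriv_eq_norm_deriv_div, sphDeriv_eq_norm_deriv_div, deriv_comp_affine, norm_mul,
      Complex.norm_real, Real.norm_of_nonneg (hρ j).le, mul_div_assoc]
  simp only [Complex.real_smul] at hbdd
  have hk : LocallyBoundedSphDerivOn (fun j y => g j (z j + ρ j * y)) atTop Set.univ := by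
    refine fun w _ => ⟨2, (hbdd w).mono fun p hp => ⟨?_, (hscale p.1 p.2).trans_le hp.2⟩⟩
    exact ((hg p.1 _ (ball_subset_closedBall hp.1)).differentiableAt).comp p.2 (by fun_prop)
  obtain ⟨φ, -, hφ⟩ := exists_subseq_tendsto_sphDeriv_zero hE
    (by simpa using hρ0.mul_const M) hk (fun w => (hbdd w).mono fun p hp hpE =>
      (hscale p.1 p.2).trans_le <| mul_le_mul_of_nonneg_left
        (hM p.1 _ (ball_subset_closedBall hp.1) hpE) (hρ p.1).le) 0
  simp [hscale, hρz] at hφ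

variable {V : Type} [NormedAddCommGroup V] [NormedSpace ℂ V]

theorem exists_sphDeriv_le_of_closedBall_subset {E : Set ℂ} (hE : 3 ≤ E.encard) {r : ℝ}
    (hr : 0 < r) (M : ℝ) :
    ∃ C, ∀ (f : V → ℂ) (y : V),
      (∀ z ∈ closedBall y r, ∀ᶠ x in 𝓝 z, DifferentiableAt ℂ f x) →
      (∀ z ∈ closedBall y r, f z ∈ E → sphDeriv f z ≤ M) → sphDeriv f y ≤ C := by
  obtain ⟨C, hC⟩ := exists_sphDeriv_le_of_forall_mem_closedBall hE hr 0 M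
  refine ⟨max C 0, fun f y hf hM => ?_⟩
  have hmem {v : V} (hv : ‖v‖ = 1) {ζ : ℂ} (hζ : ζ ∈ closedBall 0 r) :
      y + ζ • v ∈ closedBall y r := by
    simpa [norm_smul, hv] using hζ
  have hderiv {v : V} (hv : ‖v‖ = 1) {ζ : ℂ} (hζ : ζ ∈ closedBall 0 r) :
      HasDerivAt (fun ζ : ℂ => f (y + ζ • v)) (fderiv ℂ f (y + ζ • v) v) ζ :=
    (hf _ (hmem hv hζ)).self_of_nhds.hasFDerivAt.comp_hasDerivAt ζ
      (by simpa using ((hasDerivAt_id ζ).smul_const v).const_add y)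
  have hslice (v : V) (hv : ‖v‖ = 1) : ‖fderiv ℂ f y v‖ / (1 + ‖f y‖ ^ 2) ≤ C := by
    have h0 : (0 : ℂ) ∈ closedBall 0 r := mem_closedBall_self hr.le
    have := hC (fun ζ => f (y + ζ • v)) (fun ζ hζ => ?_) fun ζ hζ hE => ?_
    · simpa [sphDeriv_eq_norm_deriv_div, (hderiv hv h0).deriv] using this
    · have hcont : ContinuousAt (fun ζ : ℂ => y + ζ • v) ζ := by fun_prop
      refine Complex.analyticAt_iff_eventually_differentiableAt.2 ?_
      filter_upwards [hcont.eventually (hf _ (hmem hv hζ))] with ξ hξ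
      exact hξ.comp ξ (by fun_prop)
    · refine le_trans ?_ (hM _ (hmem hv hζ) hE)
      rw [sphDeriv_eq_norm_deriv_div, (hderiv hv hζ).deriv, sphDeriv]
      gcongr
      simpa [hv] using (fderiv ℂ f (y + ζ • v)).le_opNorm v
  rw [sphDeriv, div_le_iff₀ (by positivity)]
  refine ContinuousLinearMap.opNorm_le_of_unit_norm (by positivity) fun v hv => ?_
  rw [← div_le_iff₀ (by positivity)]
  exact (hslice v hv).trans (le_max_left C 0)

end Lappan

section Normality

lemma chordal_le_dist (a b : ℂ) : chordal a b ≤ dist a b := by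
  have hone (x : ℂ) : 1 ≤ √(1 + ‖x‖ ^ 2) := Real.one_le_sqrt.2 (by simp)
  exact div_le_self dist_nonneg (one_le_mul_of_one_le_of_one_le (hone a) (hone b))

lemma dist_le_chordal_mul (a b : ℂ) : dist a b ≤ chordal a b * ((1 + ‖a‖) * (1 + ‖b‖)) := by
  have hsqrt (x : ℂ) : √(1 + ‖x‖ ^ 2) ≤ 1 + ‖x‖ :=
    (Real.sqrt_le_left (by positivity)).2 (by nlinarith [norm_nonneg x])
  rw [chordal, div_mul_eq_mul_div, le_div_iff₀ (by positivity)]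
  gcongr <;> exact hsqrt _

lemma dist_lt_of_chordal_lt {a b : ℂ} {B ε : ℝ} (hb : ‖b‖ ≤ B) (hε : 0 < ε)
    (h : chordal a b < min (ε / 2) (1 / 2) / (1 + B) ^ 2) : dist a b < ε := by
  have hB : 0 ≤ B := (norm_nonneg b).trans hb
  have ha : ‖a‖ ≤ B + dist a b := by
    linarith [dist_eq_norm a b, norm_le_norm_add_norm_sub b a, norm_sub_rev a b]
  have hc : 0 ≤ chordal a b := by unfold chordal; positivity
  obtain ⟨hsε, hs⟩ := lt_min_iff.1 ((lt_div_iff₀ (by positivity)).1 h)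
  set s := chordal a b * (1 + B) ^ 2 with hs_def
  have hle : dist a b ≤ s * (1 + dist a b) := calc
    dist a b ≤ chordal a b * ((1 + ‖a‖) * (1 + ‖b‖)) := dist_le_chordal_mul a b
    _ ≤ chordal a b * (((1 + B) * (1 + dist a b)) * (1 + B)) := by
      gcongr
      nlinarith [mul_nonneg hB (dist_nonneg (x := a) (y := b))]
    _ = s * (1 + dist a b) := by rw [hs_def]; ring
  nlinarith [dist_nonneg (x := a) (y := b)]

lemma divergesLocallyUniformlyOn_iff_forall_isCompact {ι X : Type*} {l : Filter ι}
    [TopologicalSpace X] [LocallyCompactSpace X] {F : ι → X → ℂ} {U : Set X} (hU : IsOpen U) :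
    DivergesLocallyUniformlyOn F l U ↔
      ∀ K ⊆ U, IsCompact K → ∀ M : ℝ, ∀ᶠ j in l, ∀ z ∈ K, M < ‖F j z‖ := by
  refine ⟨fun h K hKU hK M => ?_, fun h z hz => ?_⟩
  · have hM : ∀ᶠ p in l ×ˢ 𝓝ˢ K, M < ‖F p.1 p.2‖ := by
      rw [hK.prod_nhdsSet_eq_biSup]
      simp only [eventually_iSup]
      exact fun z hz => (tendsto_norm_cobounded_atTop.comp (h z (hKU hz))).eventually_gt_atTop M
    exact hM.curry.mono fun j hj z hz => hj.self_of_nhdsSet z hz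
  · obtain ⟨K, hK, hzK, hKU⟩ := exists_compact_subset hU hz
    refine tendsto_norm_atTop_iff_cobounded.1 (tendsto_atTop.2 fun M => ?_)
    filter_upwards [(h K hKU hK M).prod_mk (mem_interior_iff_mem_nhds.1 hzK)] with p hp
    exact (hp.1 _ hp.2).le

lemma tendstoLocallyUniformlyOn_iff_forall_isCompact_chordal {ι X : Type*} {l : Filter ι}
    [TopologicalSpace X] [LocallyCompactSpace X] {F : ι → X → ℂ} {g : X → ℂ} {U : Set X}
    (hU : IsOpen U) (hg : ContinuousOn g U) :
    TendstoLocallyUniformlyOn F g l U ↔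
      ∀ K ⊆ U, IsCompact K → ∀ ε > 0, ∀ᶠ j in l, ∀ z ∈ K, chordal (F j z) (g z) < ε := by
  simp only [tendstoLocallyUniformlyOn_iff_forall_isCompact hU, tendstoUniformlyOn_iff,
    dist_comm (g _)]
  refine forall₃_congr fun K hKU hK => ⟨fun h ε hε => ?_, fun h ε hε => ?_⟩
  · exact (h ε hε).mono fun j hj z hz => (chordal_le_dist _ _).trans_lt (hj z hz)
  · obtain ⟨B, hB⟩ := hK.exists_bound_of_continuousOn (hg.mono hKU)
    have hpos : 0 < min (ε / 2) (1 / 2) / (1 + |B|) ^ 2 := by positivity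
    exact (h _ hpos).mono fun j hj z hz =>
      dist_lt_of_chordal_lt ((hB z hz).trans (le_abs_self B)) hε (hj z hz)

variable {V : Type} [NormedAddCommGroup V] [NormedSpace ℂ V] {Ω : Set V} {F : Set (V → ℂ)}

lemma isNormalFamily_iff_exists_subseq [LocallyCompactSpace V] (hΩ : IsOpen Ω) :
    IsNormalFamily Ω F ↔ ∀ s : ℕ → V → ℂ, (∀ j, s j ∈ F) → ∃ φ : ℕ → ℕ, StrictMono φ ∧
      ((∃ g, DifferentiableOn ℂ g Ω ∧ TendstoLocallyUniformlyOn (fun j => s (φ j)) g atTop Ω) ∨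
        DivergesLocallyUniformlyOn (fun j => s (φ j)) atTop Ω) := by
  refine forall₂_congr fun s _ => exists_congr fun φ => and_congr_right fun _ => or_congr
    (exists_congr fun g => and_congr_right fun hg => ?_) ?_
  · simp only [tendstoLocallyUniformlyOn_iff_forall_isCompact_chordal hΩ hg.continuousOn,
      eventually_atTop]
  · simp only [divergesLocallyUniformlyOn_iff_forall_isCompact hΩ, eventually_atTop]

theorem isNormalFamily_iff_forall_isCompact_sphDeriv_le [ProperSpace V] (hΩ : IsOpen Ω)
    (hΩc : IsPreconnected Ω) (hF : ∀ f ∈ F, DifferentiableOn ℂ f Ω) :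
    IsNormalFamily Ω F ↔ ∀ K ⊆ Ω, IsCompact K → ∃ C, ∀ f ∈ F, ∀ z ∈ K, sphDeriv f z ≤ C := by
  rw [isNormalFamily_iff_exists_subseq hΩ]
  constructor
  · intro h K hKΩ hK
    by_contra! hunbdd
    choose s hs z hz hbig using fun j : ℕ => hunbdd j
    obtain ⟨φ, hφ, hlim⟩ := h s hs
    obtain ⟨x, hx, ψ, hψ, hzx⟩ := hK.tendsto_subseq fun j => hz (φ j)
    obtain ⟨C, hC⟩ := locallyBoundedSphDerivOn_of_tendsto hΩ
      (.of_forall fun j => hF _ (hs (φ j)))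
      (hlim.imp_left fun ⟨g, hg, hlim⟩ => ⟨g, hg.continuousOn, hlim⟩) x (hKΩ hx)
    have hle : ∀ᶠ j in atTop, (φ (ψ j) : ℝ) ≤ C :=
      ((hψ.tendsto_atTop.prodMk hzx).eventually hC).mono fun j hj => (hbig _).le.trans hj.2
    obtain ⟨j, hj, hj'⟩ := (hle.and (((tendsto_natCast_atTop_atTop (R := ℝ)).comp
      (hφ.comp hψ).tendsto_atTop).eventually_gt_atTop C)).exists
    exact hj.not_gt hj'
  · intro h s hs
    refine LocallyBoundedSphDerivOn.exists_subseq_tendsto_or_diverges (fun z hz => ?_) hΩ hΩc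
    obtain ⟨K, hK, hzK, hKΩ⟩ := exists_compact_subset hΩ hz
    obtain ⟨C, hC⟩ := h K hKΩ hK
    refine ⟨C, ?_⟩
    filter_upwards [tendsto_snd.eventually (mem_interior_iff_mem_nhds.1 hzK)] with p hp
    exact ⟨(hF _ (hs p.1)).differentiableAt (hΩ.mem_nhds (hKΩ hp)), hC _ (hs p.1) _ hp⟩

lemma three_le_encard_iff {α : Type*} {E : Set α} :
    3 ≤ E.encard ↔ ∃ a b c, a ∈ E ∧ b ∈ E ∧ c ∈ E ∧ a ≠ b ∧ a ≠ c ∧ b ≠ c := by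
  constructor
  · intro h
    obtain ⟨t, htE, ht⟩ := Set.exists_subset_encard_eq h
    obtain ⟨a, b, c, hab, hac, hbc, rfl⟩ := Set.encard_eq_three.1 ht
    exact ⟨a, b, c, htE (by simp), htE (by simp), htE (by simp), hab, hac, hbc⟩
  · rintro ⟨a, b, c, ha, hb, hc, hab, hac, hbc⟩
    have hsub : {a, b, c} ⊆ E := by simp [Set.insert_subset_iff, ha, hb, hc]
    exact (Set.encard_eq_three.2 ⟨a, b, c, hab, hac, hbc, rfl⟩).ge.trans (Set.encard_le_encard hsub)

theorem stmt13_general [ProperSpace V] (hΩ : IsOpen Ω) (hΩc : IsPreconnected Ω)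
    (hF : ∀ f ∈ F, DifferentiableOn ℂ f Ω) :
    IsNormalFamily Ω F ↔
      ∀ K, K ⊆ Ω → IsCompact K → ∃ E : Set ℂ, ∃ M : ℝ, 0 < M ∧
        (∃ a b c : ℂ, a ∈ E ∧ b ∈ E ∧ c ∈ E ∧ a ≠ b ∧ a ≠ c ∧ b ≠ c) ∧
        ∀ f ∈ F, ∀ z ∈ K, f z ∈ E → sphDeriv f z ≤ M := by
  simp only [isNormalFamily_iff_forall_isCompact_sphDeriv_le hΩ hΩc hF, ← three_le_encard_iff]
  constructor
  · intro h K hKΩ hK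
    obtain ⟨C, hC⟩ := h K hKΩ hK
    exact ⟨Set.univ, max C 1, by positivity, by simp,
      fun f hf z hz _ => (hC f hf z hz).trans (le_max_left C 1)⟩
  · intro h K hKΩ hK
    obtain ⟨r, hr, hrΩ⟩ := hK.exists_cthickening_subset_open hΩ hKΩ
    obtain ⟨E, M, -, hE, hM⟩ := h _ hrΩ hK.cthickening
    obtain ⟨C, hC⟩ := exists_sphDeriv_le_of_closedBall_subset (V := V) hE hr M
    refine ⟨C, fun f hf z hz => ?_⟩
    have hball : closedBall z r ⊆ cthickening r K := closedBall_subset_cthickening hz r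
    exact hC f z (fun y hy => (hF f hf).eventually_differentiableAt (hΩ.mem_nhds (hrΩ (hball hy))))
      fun y hy => hM f hf y (hball hy)

end Normality

/-- Lappan-type normality criterion in ℂⁿ. -/
theorem stmt13 {n : ℕ} {Ω : Set (Cn n)} (hΩ : IsOpen Ω) (hconn : IsConnected Ω)
    (F : Set (Cn n → ℂ)) (hhol : ∀ f ∈ F, DifferentiableOn ℂ f Ω) :
    IsNormalFamily Ω F ↔
      ∀ K, K ⊆ Ω → IsCompact K → ∃ E : Set ℂ, ∃ M : ℝ, 0 < M ∧
        (∃ a b c : ℂ, a ∈ E ∧ b ∈ E ∧ c ∈ E ∧ a ≠ b ∧ a ≠ c ∧ b ≠ c) ∧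
        ∀ f ∈ F, ∀ z ∈ K, f z ∈ E → sphDeriv f z ≤ M :=
  stmt13_general hΩ hconn.isPreconnected hhol
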